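/- Let the hypotheses of the quadratic Lyapunov functional theorem for the nonlinear delay equation hold with j = 0 and ν ≥ 0 (i.e., the characteristic equation det(α(p)−pI) = 0 has no roots with Re p ≥ −ν, the quadratic form 𝓕(v,ξ) = 𝒢(Cv,ξ) satisfies 𝓕(v,0) ≥ 0 and (SC) or (MSC), and the frequency-domain condition sup_{0≠ξ∈ℂᵐ} 𝒢^ℂ(−W(iω−ν)ξ,ξ)/|ξ|²_Ξ < 0 holds for all ω ∈ ℝ). Then: (1) if additionally (SC) and (L1) hold and W ≡ 0, there exist constants M > 0 and ε > 0 such that ‖ψ^t(q,v₀)‖_𝔼 ≤ M e^{−(ν+ε)t} ‖v₀‖_𝔼 for all t ≥ 0, q ∈ ℝ, v₀ ∈ 𝔼; (2) if (MSC) and (L2) hold and there exists a complete trajectory v* : ℝ → 𝔼 (i.e. ψ^t(q, v*(q)) = v*(q+t) for all t ≥ 0, q ∈ ℝ) which is bounded on ℝ, then v* is unique and there exist constants M > 0 and ε > 0 such that ‖ψ^t(q,v₀) − ψ^t(q,v*(q))‖_𝔼 ≤ M e^{−(ν+ε)t} ‖v₀ − v*(q)‖_𝔼 for all t ≥ 0,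 q ∈ ℝ, v₀ ∈ 𝔼. -/

import Mathlib

/-!
Substituting `y(t) = e^{νt} x(t)` moves the frequency condition from the line `Re p = -ν` to the
imaginary axis, so it suffices to prove exponential stability there. Adding a small multiple of
`L|σ|² - |ξ|²` to `𝒢`, which is nonnegative along solutions by (L1) or (L2) for `L` large, makes the
frequency condition uniform in `ω`, with a margin that controls both `|y|²` and `|ẏ|²`. For a
trajectory of `ẏ(t) = A y_t + B ξ(t)` that starts from rest and is followed by free motion after a
time `T`, everything decays, so Plancherel's theorem bounds the `L²` norms of `y` and `ẏ` by minus
the integral of `𝒢(C y_t, ξ)`. The sector condition makes `𝒢` nonnegative along solutions, and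
subtracting a free solution gives rest initial data; this bounds the `L²` norm of each solution by
its initial segment, and such an estimate at every initial time forces exponential decay (Datko).
Applied to differences of solutions the result is a contraction of the cocycle, under which two
bounded complete trajectories coincide.
-/

open MeasureTheory Filter Topology Matrix

noncomputable section

namespace DelayStability

variable {n : ℕ}

/-- The history segment `x_t ∈ C([-τ, 0]; ℝⁿ)` of a continuous `x : ℝ → ℝⁿ`. -/
def seg (τ : ℝ) (x : ℝ → (Fin n → ℝ)) (hx : Continuous x) (t : ℝ) :
    C(Set.Icc (-τ) (0:ℝ), Fin n → ℝ) :=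
  ⟨fun θ => x (t + θ), hx.comp (continuous_const.add continuous_subtype_val)⟩

/-- The measure of `L²(-τ, 0; ℝⁿ)`. -/
def μτ (τ : ℝ) : Measure ℝ := volume.restrict (Set.Ioo (-τ) 0)

/-- The delay phase Hilbert space `ℍ = ℝⁿ × L²(-τ, 0; ℝⁿ)`. -/
abbrev HSp (τ : ℝ) (n : ℕ) := (Fin n → ℝ) × Lp (Fin n → ℝ) 2 (μτ τ)

/-- The space `𝔼 = C([-τ, 0]; ℝⁿ)`. -/
abbrev EE (τ : ℝ) (n : ℕ) := C(Set.Icc (-τ) (0:ℝ), Fin n → ℝ)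

/-- Real part of the exponential segment `θ ↦ e^{pθ} w`. -/
def expSegRe (τ : ℝ) {n : ℕ} (p : ℂ) (w : Fin n → ℂ) : EE τ n :=
  ⟨fun θ => fun i => (Complex.exp (p * (θ : ℝ)) * w i).re, by
    apply continuous_pi
    intro i
    exact Complex.continuous_re.comp
      ((Complex.continuous_exp.comp (continuous_const.mul
        (Complex.continuous_ofReal.comp continuous_subtype_val))).mul continuous_const)⟩

/-- The quadratic form `𝒢(σ, ξ)` on `ℝʳ × ℝᵐ` given by matrices `G₁, G₂, G₃`. -/
def Gq {r m : ℕ} (G1 : Matrix (Fin r) (Fin r) ℝ) (G2 : Matrix (Fin r) (Fin m) ℝ)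
    (G3 : Matrix (Fin m) (Fin m) ℝ) (σ : Fin r → ℝ) (ξ : Fin m → ℝ) : ℝ :=
  σ ⬝ᵥ G1.mulVec σ + 2 * (σ ⬝ᵥ G2.mulVec ξ) + ξ ⬝ᵥ G3.mulVec ξ

/-- The Hermitian extension `𝒢^ℂ` of `𝒢` to `ℂʳ × ℂᵐ`. -/
def GqC {r m : ℕ} (G1 : Matrix (Fin r) (Fin r) ℝ) (G2 : Matrix (Fin r) (Fin m) ℝ)
    (G3 : Matrix (Fin m) (Fin m) ℝ) (σ : Fin r → ℂ) (ξ : Fin m → ℂ) : ℝ :=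
  Gq G1 G2 G3 (fun i => (σ i).re) (fun i => (ξ i).re) +
    Gq G1 G2 G3 (fun i => (σ i).im) (fun i => (ξ i).im)

variable {τ : ℝ}

theorem hasDerivWithinAt_comp_add_const {E : Type*} [NormedAddCommGroup E] [NormedSpace ℝ E]
    {f : ℝ → E} {f' : E} {s t : Set ℝ} {a q : ℝ} (hf : HasDerivWithinAt f f' t (a + q))
    (hst : Set.MapsTo (· + q) s t) : HasDerivWithinAt (fun u => f (u + q)) f' s a := by
  simpa [Function.comp_def] using hf.scomp a ((hasDerivAt_id a).add_const q).hasDerivWithinAt hst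

section Segments

theorem seg_apply {x : ℝ → Fin n → ℝ} (hx : Continuous x) (t : ℝ) (θ : Set.Icc (-τ) (0 : ℝ)) :
    seg τ x hx t θ = x (t + θ) := rfl

theorem continuous_seg {x : ℝ → Fin n → ℝ} (hx : Continuous x) : Continuous (seg τ x hx) :=
  ContinuousMap.continuous_of_continuous_uncurry _
    (hx.comp (continuous_fst.add (continuous_subtype_val.comp continuous_snd)))

theorem seg_congr {x y : ℝ → Fin n → ℝ} (hx : Continuous x) (hy : Continuous y) {s t : ℝ}
    (h : ∀ θ ∈ Set.Icc (-τ) (0 : ℝ), x (s + θ) = y (t + θ)) : seg τ x hx s = seg τ y hy t :=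
  ContinuousMap.ext fun θ => h θ θ.2

theorem seg_comp_add_const {x : ℝ → Fin n → ℝ} (hx : Continuous x) (q t : ℝ) :
    seg τ (fun s => x (s + q)) (hx.comp (continuous_add_const q)) t = seg τ x hx (t + q) :=
  seg_congr _ _ fun θ _ => by rw [add_right_comm]

theorem norm_seg_le {x : ℝ → Fin n → ℝ} (hx : Continuous x) {t c : ℝ} (hc : 0 ≤ c)
    (h : ∀ s ∈ Set.Icc (t - τ) t, ‖x s‖ ≤ c) : ‖seg τ x hx t‖ ≤ c :=
  (ContinuousMap.norm_le _ hc).2 fun θ => h _ ⟨by linarith [θ.2.1], by linarith [θ.2.2]⟩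

theorem norm_le_norm_seg {x : ℝ → Fin n → ℝ} (hx : Continuous x) {s t : ℝ}
    (hs : s ∈ Set.Icc (t - τ) t) : ‖x s‖ ≤ ‖seg τ x hx t‖ := by
  simpa [seg_apply] using
    (seg τ x hx t).norm_coe_le_norm ⟨s - t, by constructor <;> linarith [hs.1, hs.2]⟩

end Segments

section LinearEquation

/-- A global forward solution `x` of the autonomous linear delay equation `ẋ(t) = A x_t`. -/
def IsFreeSolution (A : EE τ n →L[ℝ] (Fin n → ℝ)) (x : ℝ → Fin n → ℝ) (hx : Continuous x) :
    Prop :=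
  ∀ t, 0 ≤ t → HasDerivWithinAt x (A (seg τ x hx t)) (Set.Ici 0) t

/-- The Volterra operator `x ↦ ∫₀^{max t 0} A x_s ds` of the equation `ẋ(t) = A x_t`. -/
def volterra (A : EE τ n →L[ℝ] (Fin n → ℝ)) (x : ℝ → Fin n → ℝ) (hx : Continuous x) (t : ℝ) :
    Fin n → ℝ :=
  ∫ s in (0 : ℝ)..max t 0, A (seg τ x hx s)

variable {A : EE τ n →L[ℝ] (Fin n → ℝ)} {x y : ℝ → Fin n → ℝ} {hx : Continuous x}
  {hy : Continuous y}

theorem continuous_apply_seg : Continuous fun t => A (seg τ x hx t) :=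
  A.continuous.comp (continuous_seg hx)

theorem continuous_volterra : Continuous (volterra A x hx) :=
  (intervalIntegral.continuous_primitive
    (fun a b => continuous_apply_seg.intervalIntegrable a b) 0).comp
    (continuous_id.max continuous_const)

theorem volterra_sub (t : ℝ) :
    volterra A x hx t - volterra A y hy t = volterra A (x - y) (hx.sub hy) t := by
  rw [volterra, volterra, ← intervalIntegral.integral_sub
    (continuous_apply_seg.intervalIntegrable _ _) (continuous_apply_seg.intervalIntegrable _ _)]
  exact intervalIntegral.integral_congr fun s _ => (map_sub A _ _).symm

theorem hasDerivWithinAt_volterra {t : ℝ} (ht : 0 ≤ t) :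
    HasDerivWithinAt (volterra A x hx) (A (seg τ x hx t)) (Set.Ici 0) t := by
  have hc : Continuous fun s => A (seg τ x hx s) := continuous_apply_seg
  refine ((intervalIntegral.integral_hasDerivAt_right (hc.intervalIntegrable 0 t)
    (hc.stronglyMeasurableAtFilter _ _) hc.continuousAt).hasDerivWithinAt).congr
    (fun s hs => ?_) ?_
  · rw [volterra, max_eq_left hs]
  · rw [volterra, max_eq_left ht]

theorem integral_exp_mul_zero_right {c : ℝ} (hc : c ≠ 0) (b : ℝ) :
    ∫ s in (0 : ℝ)..b, Real.exp (c * s) = c⁻¹ * (Real.exp (c * b) - 1) := by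
  rw [intervalIntegral.integral_comp_mul_left (fun s => Real.exp s) hc, integral_exp]
  simp

theorem norm_volterra_le {c K : ℝ} (hc : 0 < c) (hK : 0 ≤ K) {t : ℝ}
    (h : ∀ s ∈ Set.Icc (-τ) (max t 0), ‖x s‖ ≤ K * Real.exp (c * max s 0)) :
    ‖volterra A x hx t‖ ≤ ‖A‖ / c * K * Real.exp (c * max t 0) := by
  have hA : ∀ s ∈ Set.Ioc 0 (max t 0),
      ‖A (seg τ x hx s)‖ ≤ ‖A‖ * K * Real.exp (c * s) := fun s hs => by
    refine (A.le_opNorm _).trans ?_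
    rw [mul_assoc]
    gcongr
    refine norm_seg_le _ (by positivity) fun u hu => (h u ⟨?_, ?_⟩).trans ?_
    · linarith [hu.1, hs.1]
    · exact hu.2.trans hs.2
    · gcongr
      exact max_le hu.2 hs.1.le
  have hint : ∫ s in (0 : ℝ)..max t 0, ‖A‖ * K * Real.exp (c * s) =
      ‖A‖ / c * K * (Real.exp (c * max t 0) - 1) := by
    rw [intervalIntegral.integral_const_mul, integral_exp_mul_zero_right hc.ne']
    ring
  refine (intervalIntegral.norm_integral_le_of_norm_le (le_max_right _ _)
    (Eventually.of_forall hA)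
    ((by fun_prop : Continuous _).intervalIntegrable _ _)).trans ?_
  rw [hint]
  gcongr
  linarith

open BoundedContinuousFunction in
/-- The fixed point is found among the functions `t ↦ e^{c max(t,0)} u(t)` with `u` bounded, where
the Volterra operator is a contraction for `c > ‖A‖`. -/
theorem exists_eq_add_volterra (A : EE τ n →L[ℝ] (Fin n → ℝ)) (f : ℝ →ᵇ (Fin n → ℝ)) :
    ∃ (x : ℝ → Fin n → ℝ) (hx : Continuous x), ∀ t, x t = f t + volterra A x hx t := by
  set c : ℝ := 2 * ‖A‖ + 1
  have hc : 0 < c := by positivity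
  have hAc : ‖A‖ / c ≤ 1 / 2 := by rw [div_le_div_iff₀ hc two_pos]; linarith
  let w : ℝ → ℝ := fun t => Real.exp (c * max t 0)
  have hw : Continuous w := by fun_prop
  have hw1 : ∀ t, 1 ≤ w t := fun t => Real.one_le_exp (by positivity)
  have hw0 : ∀ t, 0 < w t := fun t => Real.exp_pos _
  have hX (u : ℝ →ᵇ (Fin n → ℝ)) : Continuous fun t => w t • u t := hw.smul u.continuous
  have hV (u : ℝ →ᵇ (Fin n → ℝ)) (t : ℝ) :
      ‖volterra A (fun t => w t • u t) (hX u) t‖ ≤ w t * (1 / 2 * ‖u‖) := by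
    refine (norm_volterra_le (K := ‖u‖) hc (norm_nonneg _) fun s _ => ?_).trans ?_
    · rw [norm_smul, Real.norm_of_nonneg (hw0 s).le, mul_comm]
      exact mul_le_mul_of_nonneg_right (u.norm_coe_le_norm s) (hw0 s).le
    · rw [mul_comm]
      gcongr
  let Φ : (ℝ →ᵇ (Fin n → ℝ)) → (ℝ →ᵇ (Fin n → ℝ)) := fun u =>
    .ofNormedAddCommGroup (fun t => (w t)⁻¹ • (f t + volterra A (fun t => w t • u t) (hX u) t))
      ((hw.inv₀ fun t => (hw0 t).ne').smul (f.continuous.add continuous_volterra))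
      (‖f‖ + 1 / 2 * ‖u‖) fun t => by
        rw [norm_smul, norm_inv, Real.norm_of_nonneg (hw0 t).le, inv_mul_le_iff₀ (hw0 t), mul_add]
        refine (norm_add_le _ _).trans (add_le_add ?_ (hV u t))
        exact (f.norm_coe_le_norm t).trans (le_mul_of_one_le_left (norm_nonneg _) (hw1 t))
  have hΦu (u t) :
      Φ u t = (w t)⁻¹ • (f t + volterra A (fun t => w t • u t) (hX u) t) := rfl
  have hΦ : ContractingWith (1 / 2) Φ := by
    refine ⟨by rw [← NNReal.coe_lt_coe]; norm_num, LipschitzWith.of_dist_le_mul fun u v => ?_⟩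
    refine (dist_le (by positivity)).2 fun t => ?_
    have hsub : Φ u t - Φ v t = (w t)⁻¹ • volterra A (fun t => w t • (u - v) t) (hX (u - v)) t := by
      rw [hΦu, hΦu, ← smul_sub, add_sub_add_left_eq_sub, volterra_sub]
      congr 2
      exact funext fun s => (smul_sub _ _ _).symm
    rw [dist_eq_norm, hsub, norm_smul, norm_inv, Real.norm_of_nonneg (hw0 t).le,
      inv_mul_le_iff₀ (hw0 t), dist_eq_norm]
    simpa using hV (u - v) t
  refine ⟨_, hX (hΦ.fixedPoint Φ), fun t => ?_⟩
  calc w t • (hΦ.fixedPoint Φ) t = w t • Φ (hΦ.fixedPoint Φ) t := by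
        rw [hΦ.fixedPoint_isFixedPt.eq]
    _ = _ := smul_inv_smul₀ (hw0 t).ne' _

variable (A) in
theorem exists_isFreeSolution (hτ : 0 ≤ τ) (φ : EE τ n) :
    ∃ (x : ℝ → Fin n → ℝ) (hx : Continuous x), seg τ x hx 0 = φ ∧ IsFreeSolution A x hx := by
  have hτ' : -τ ≤ 0 := by linarith
  let f : BoundedContinuousFunction ℝ (Fin n → ℝ) :=
    .ofNormedAddCommGroup (Set.IccExtend hτ' φ) φ.continuous.Icc_extend' ‖φ‖
      fun t => φ.norm_coe_le_norm _
  obtain ⟨x, hx, hxf⟩ := exists_eq_add_volterra A f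
  refine ⟨x, hx, ContinuousMap.ext fun θ => ?_, fun t ht => ?_⟩
  · have hθ : max (0 + (θ : ℝ)) 0 = 0 := by simpa using θ.2.2
    rw [seg_apply, hxf, volterra, hθ, intervalIntegral.integral_same, add_zero, zero_add]
    exact Set.IccExtend_val hτ' _ _
  · refine ((hasDerivWithinAt_volterra ht).const_add (φ ⟨0, hτ', le_rfl⟩)).congr_of_mem
      (fun s hs => ?_) ht
    rw [hxf]
    exact congrArg (· + _) (Set.IccExtend_of_right_le _ _ hs)

theorem IsFreeSolution.add (h : IsFreeSolution A x hx) (h' : IsFreeSolution A y hy) :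
    IsFreeSolution A (x + y) (hx.add hy) := fun t ht =>
  ((h t ht).add (h' t ht)).congr_deriv (map_add A _ _).symm

theorem IsFreeSolution.const_smul (c : ℝ) (h : IsFreeSolution A x hx) :
    IsFreeSolution A (c • x) (hx.const_smul c) := fun t ht =>
  ((h t ht).const_smul c).congr_deriv (map_smul A _ _).symm

theorem IsFreeSolution.sub (h : IsFreeSolution A x hx) (h' : IsFreeSolution A y hy) :
    IsFreeSolution A (x - y) (hx.sub hy) := fun t ht =>
  ((h t ht).sub (h' t ht)).congr_deriv (map_sub A _ _).symm

theorem IsFreeSolution.comp_add_right {q : ℝ} (hq : 0 ≤ q) (h : IsFreeSolution A x hx) :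
    IsFreeSolution A (fun t => x (t + q)) (hx.comp (continuous_add_const q)) := fun t ht => by
  rw [seg_comp_add_const hx]
  exact hasDerivWithinAt_comp_add_const (h (t + q) (by positivity)) fun s (hs : 0 ≤ s) =>
    show 0 ≤ s + q by positivity

theorem IsFreeSolution.eq_add_volterra (h : IsFreeSolution A x hx) {t : ℝ} (ht : 0 ≤ t) :
    x t = x 0 + volterra A x hx t := by
  have hc : Continuous fun t => A (seg τ x hx t) := continuous_apply_seg
  have hint := intervalIntegral.integral_eq_sub_of_hasDeriv_right_of_le ht hx.continuousOn
    (fun s hs => (h s hs.1.le).mono fun u (hu : s < u) => (hs.1.trans hu).le)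
    (hc.intervalIntegrable 0 t)
  rw [volterra, max_eq_left ht, hint, add_sub_cancel]

theorem IsFreeSolution.norm_le (hτ : 0 ≤ τ) (h : IsFreeSolution A x hx) {t : ℝ} (ht : -τ ≤ t) :
    ‖x t‖ ≤ 2 * ‖seg τ x hx 0‖ * Real.exp ((2 * ‖A‖ + 1) * max t 0) := by
  set c : ℝ := 2 * ‖A‖ + 1
  have hc : 0 < c := by positivity
  have hAc : ‖A‖ / c ≤ 1 / 2 := by rw [div_le_div_iff₀ hc two_pos]; linarith
  obtain ⟨a, ha, hmax⟩ := isCompact_Icc.exists_isMaxOn (Set.nonempty_Icc.2 ht)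
    (f := fun s => ‖x s‖ / Real.exp (c * max s 0))
    ((hx.norm.div (by fun_prop) fun s => (Real.exp_pos _).ne').continuousOn)
  set S := ‖x a‖ / Real.exp (c * max a 0) with hS
  have hxS : ∀ s ∈ Set.Icc (-τ) t, ‖x s‖ ≤ S * Real.exp (c * max s 0) := fun s hs =>
    (div_le_iff₀ (Real.exp_pos _)).1 (hmax hs)
  suffices hS2 : S ≤ 2 * ‖seg τ x hx 0‖ from
    (hxS t ⟨ht, le_rfl⟩).trans (by gcongr)
  have he : 1 ≤ Real.exp (c * max a 0) := Real.one_le_exp (by positivity)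
  rcases le_total a 0 with ha0 | ha0
  · have hxa := norm_le_norm_seg (τ := τ) hx (s := a) (t := 0) ⟨by linarith [ha.1], ha0⟩
    exact (div_le_self (norm_nonneg _) he).trans (by linarith [norm_nonneg (x a)])
  · have hx0 := norm_le_norm_seg (τ := τ) hx (s := 0) (t := 0) ⟨by linarith, le_rfl⟩
    have hV : ‖volterra A x hx a‖ ≤ ‖x a‖ / 2 := by
      refine (norm_volterra_le (K := S) hc (by positivity) fun s hs =>
        hxS s ⟨hs.1, hs.2.trans ((max_eq_left ha0).le.trans ha.2)⟩).trans ?_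
      rw [mul_assoc, hS, div_mul_cancel₀ _ (Real.exp_pos _).ne']
      nlinarith [norm_nonneg (x a)]
    have hxa : ‖x a‖ ≤ ‖x 0‖ + ‖volterra A x hx a‖ := by
      rw [h.eq_add_volterra ha0]; exact norm_add_le _ _
    exact (div_le_self (norm_nonneg _) he).trans (by linarith)

theorem IsFreeSolution.norm_seg_le (hτ : 0 ≤ τ) (h : IsFreeSolution A x hx) {t : ℝ}
    (ht : 0 ≤ t) :
    ‖seg τ x hx t‖ ≤ 2 * Real.exp ((2 * ‖A‖ + 1) * t) * ‖seg τ x hx 0‖ := by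
  refine DelayStability.norm_seg_le _ (by positivity) fun s hs =>
    (h.norm_le hτ (by linarith [hs.1])).trans ?_
  rw [mul_right_comm]
  gcongr
  exact max_le hs.2 ht

theorem IsFreeSolution.seg_eq (hτ : 0 ≤ τ) (h : IsFreeSolution A x hx)
    (h' : IsFreeSolution A y hy) (h0 : seg τ x hx 0 = seg τ y hy 0) {t : ℝ} (ht : 0 ≤ t) :
    seg τ x hx t = seg τ y hy t := by
  have hsub (s : ℝ) : seg τ (x - y) (hx.sub hy) s = seg τ x hx s - seg τ y hy s := rfl
  have hle := (h.sub h').norm_seg_le hτ ht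
  rw [hsub, hsub, h0, sub_self, norm_zero, mul_zero] at hle
  exact sub_eq_zero.1 (norm_le_zero_iff.1 hle)

end LinearEquation

section SemigroupDecay

theorem le_exp_of_le_half {b : ℝ → ℝ} {K a : ℝ} (hK : 0 ≤ K) (ha : 0 < a) (hb : 0 ≤ b 0)
    (hbK : ∀ s t, 0 ≤ s → 0 ≤ t → b (s + t) ≤ K * b s)
    (hhalf : ∀ s, 0 ≤ s → b (s + a) ≤ 1 / 2 * b s) {t : ℝ} (ht : 0 ≤ t) :
    b t ≤ 2 * K * Real.exp (-(Real.log 2 / a) * t) * b 0 := by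
  have hpow (k : ℕ) : b (k * a) ≤ (1 / 2) ^ k * b 0 := by
    induction k with
    | zero => simp
    | succ k ih =>
      have := hhalf (k * a) (by positivity)
      rw [show ((k + 1 : ℕ) : ℝ) * a = k * a + a by push_cast; ring, pow_succ]
      linarith
  set k := ⌊t / a⌋₊
  have hka : (k : ℝ) * a ≤ t := (le_div_iff₀ ha).1 (Nat.floor_le (by positivity))
  have hkt : t < (k + 1) * a := (div_lt_iff₀ ha).1 (Nat.lt_floor_add_one (t / a))
  have hexp : (1 / 2 : ℝ) ^ k ≤ 2 * Real.exp (-(Real.log 2 / a) * t) := by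
    have hlog : 0 < Real.log 2 := Real.log_pos one_lt_two
    have hle : Real.log 2 / a * t ≤ Real.log 2 * (k + 1) := by
      rw [div_mul_eq_mul_div, div_le_iff₀ ha]
      nlinarith
    calc (1 / 2 : ℝ) ^ k = Real.exp (Real.log 2 + -(Real.log 2 * (k + 1))) := by
          rw [show Real.log 2 + -(Real.log 2 * (k + 1)) = k * -Real.log 2 by ring,
            Real.exp_nat_mul, Real.exp_neg, Real.exp_log two_pos, one_div]
      _ ≤ Real.exp (Real.log 2 + -(Real.log 2 / a) * t) := by gcongr; linarith
      _ = 2 * Real.exp (-(Real.log 2 / a) * t) := by rw [Real.exp_add, Real.exp_log two_pos]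
  calc b t ≤ K * b (k * a) := by
        simpa using hbK (k * a) (t - k * a) (by positivity) (by linarith)
    _ ≤ K * ((2 * Real.exp (-(Real.log 2 / a) * t)) * b 0) := by
        gcongr; exact (hpow k).trans (by gcongr)
    _ = _ := by ring

variable {E F : Type*} [NormedAddCommGroup E] [NormedSpace ℝ E] [NormedAddCommGroup F]
  [NormedSpace ℝ F]

theorem tendsto_comp_isCompactOperator {ι : Type*} {l : Filter ι} {T : ι → F →L[ℝ] F} {C : ℝ}
    (hC : ∀ i, ‖T i‖ ≤ C) (hT : ∀ v, Tendsto (fun i => T i v) l (𝓝 0)) {K : E →L[ℝ] F}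
    (hK : IsCompactOperator K) : Tendsto (fun i => T i ∘L K) l (𝓝 0) := by
  rw [Metric.tendsto_nhds]
  intro ε hε
  obtain ⟨N, hNfin, hN⟩ := Metric.totallyBounded_iff.1
    ((hK.isCompact_closure_image_closedBall 1).totallyBounded.subset subset_closure)
    (ε / (4 * (|C| + 1))) (by positivity)
  have hsmall : ∀ᶠ i in l, ∀ y ∈ N, ‖T i y‖ < ε / 4 :=
    (eventually_all_finite hNfin).2 fun y _ => by
      simpa using Metric.tendsto_nhds.1 (hT y) (ε / 4) (by positivity)
  filter_upwards [hsmall] with i hi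
  have hle : ‖T i ∘L K‖ ≤ ε / 2 := by
    refine ContinuousLinearMap.opNorm_le_of_unit_norm (by positivity) fun v hv => ?_
    obtain ⟨y, hy, hKy⟩ := Set.mem_iUnion₂.1
      (hN (Set.mem_image_of_mem K (mem_closedBall_zero_iff.2 hv.le)))
    have hdiff : ‖T i (K v - y)‖ ≤ ε / 4 := calc
      ‖T i (K v - y)‖ ≤ (|C| + 1) * (ε / (4 * (|C| + 1))) := by
          refine (T i).le_of_opNorm_le_of_le ((hC i).trans ?_) (mem_ball_iff_norm.1 hKy).le
          linarith [le_abs_self C]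
      _ = ε / 4 := by field_simp
    calc ‖T i (K v)‖ = ‖T i (K v - y) + T i y‖ := by rw [← map_add, sub_add_cancel]
      _ ≤ ε / 4 + ε / 4 := norm_add_le_of_le hdiff (hi y hy).le
      _ = ε / 2 := by ring
  rw [dist_zero_right]
  linarith

open NNReal

theorem exists_norm_le_of_tendsto [CompleteSpace E] {T : ℝ≥0 → E →L[ℝ] F}
    (hbdd : ∀ a, ∃ K, ∀ t ≤ a, ‖T t‖ ≤ K) (hlim : ∀ v, Tendsto (fun t => T t v) atTop (𝓝 0)) :
    ∃ K, ∀ t, ‖T t‖ ≤ K := by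
  refine banach_steinhaus fun v => ?_
  obtain ⟨a, ha⟩ := eventually_atTop.1 (Metric.tendsto_nhds.1 (hlim v) 1 one_pos)
  obtain ⟨K, hK⟩ := hbdd a
  refine ⟨max 1 (K * ‖v‖), fun t => ?_⟩
  rcases le_total a t with h | h
  · exact le_max_of_le_left (by simpa using (ha t h).le)
  · exact le_max_of_le_right ((T t).le_of_opNorm_le (hK t h) v)

/-- Compactness upgrades strong to uniform convergence, so that some `T t` has norm at most
`1/2`. -/
theorem exists_norm_le_exp_of_isCompactOperator [CompleteSpace E] {T : ℝ≥0 → E →L[ℝ] E}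
    (hadd : ∀ s t, T (s + t) = T s ∘L T t) (hbdd : ∀ a, ∃ K, ∀ t ≤ a, ‖T t‖ ≤ K)
    (hlim : ∀ v, Tendsto (fun t => T t v) atTop (𝓝 0)) {a : ℝ≥0} (ha : IsCompactOperator (T a)) :
    ∃ M > (0 : ℝ), ∃ ε > (0 : ℝ), ∀ t, ‖T t‖ ≤ M * Real.exp (-ε * t) := by
  obtain ⟨K, hK⟩ := exists_norm_le_of_tendsto hbdd hlim
  have hK0 : 0 ≤ K := (norm_nonneg _).trans (hK 0)
  obtain ⟨b, hb, hb0⟩ := ((Metric.tendsto_nhds.1 (tendsto_comp_isCompactOperator hK hlim ha)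
    (1 / 2) (by positivity)).and (eventually_gt_atTop 0)).exists
  have hhalf : ‖T (b + a)‖ ≤ 1 / 2 := by
    simpa [hadd] using hb.le
  have hba : (0 : ℝ) < (b + a : ℝ≥0) := by exact_mod_cast add_pos_of_pos_of_nonneg hb0 a.2
  refine ⟨2 * K * ‖T 0‖ + 1, by positivity, _, div_pos (Real.log_pos one_lt_two) hba, fun t => ?_⟩
  have hstep (s t : ℝ) (ht : 0 ≤ t) (hs : 0 ≤ s) :
      ‖T (s + t).toNNReal‖ ≤ ‖T t.toNNReal‖ * ‖T s.toNNReal‖ := by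
    rw [Real.toNNReal_add hs ht, add_comm, hadd]
    exact ContinuousLinearMap.opNorm_comp_le _ _
  have hdecay := le_exp_of_le_half (b := fun t => ‖T t.toNNReal‖) hK0 hba (norm_nonneg _)
    (fun s t hs ht => (hstep s t ht hs).trans (by gcongr; exact hK _))
    (fun s hs => (hstep s _ hba.le hs).trans (by gcongr; simpa using hhalf)) t.coe_nonneg
  rw [Real.toNNReal_coe, Real.toNNReal_zero] at hdecay
  nlinarith [Real.exp_pos (-(Real.log 2 / (b + a : ℝ≥0)) * t)]

end SemigroupDecay

section LinearDecay

open NNReal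

variable {A : EE τ n →L[ℝ] (Fin n → ℝ)}

/-- The operators `T t` propagate the history segments of the solutions of `ẋ(t) = A x_t`. -/
def IsSolutionSemigroup (A : EE τ n →L[ℝ] (Fin n → ℝ)) (T : ℝ≥0 → EE τ n →L[ℝ] EE τ n) : Prop :=
  ∀ (x : ℝ → Fin n → ℝ) (hx : Continuous x), IsFreeSolution A x hx →
    ∀ t : ℝ≥0, T t (seg τ x hx 0) = seg τ x hx t

variable (A) in
theorem exists_isSolutionSemigroup (hτ : 0 ≤ τ) :
    ∃ T : ℝ≥0 → EE τ n →L[ℝ] EE τ n, IsSolutionSemigroup A T := by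
  choose X hX hX0 hXA using exists_isFreeSolution A hτ
  have hadd (φ ψ : EE τ n) (t : ℝ≥0) : seg τ (X (φ + ψ)) (hX _) t =
      seg τ (X φ) (hX _) t + seg τ (X ψ) (hX _) t :=
    (hXA _).seg_eq hτ ((hXA φ).add (hXA ψ))
      ((hX0 _).trans (congrArg₂ (· + ·) (hX0 φ) (hX0 ψ)).symm) t.coe_nonneg
  have hsmul (c : ℝ) (φ : EE τ n) (t : ℝ≥0) :
      seg τ (X (c • φ)) (hX _) t = c • seg τ (X φ) (hX _) t :=
    (hXA _).seg_eq hτ ((hXA φ).const_smul c)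
      ((hX0 _).trans (congrArg (c • ·) (hX0 φ)).symm) t.coe_nonneg
  refine ⟨fun t => LinearMap.mkContinuous
    { toFun := fun φ => seg τ (X φ) (hX φ) t
      map_add' := fun φ ψ => hadd φ ψ t
      map_smul' := fun c φ => hsmul c φ t } (2 * Real.exp ((2 * ‖A‖ + 1) * t)) fun φ => ?_,
    fun x hx h t => (hXA _).seg_eq hτ h (hX0 _) t.coe_nonneg⟩
  have hle := (hXA φ).norm_seg_le hτ t.coe_nonneg
  rwa [hX0] at hle

namespace IsSolutionSemigroup

variable {T : ℝ≥0 → EE τ n →L[ℝ] EE τ n}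

theorem comp (hτ : 0 ≤ τ) (hT : IsSolutionSemigroup A T) (s t : ℝ≥0) :
    T (s + t) = T s ∘L T t := by
  ext1 φ
  obtain ⟨x, hx, rfl, hxA⟩ := exists_isFreeSolution A hτ φ
  have hshift := hT _ _ (hxA.comp_add_right t.coe_nonneg) s
  rw [seg_comp_add_const hx, seg_comp_add_const hx, zero_add] at hshift
  rw [hT x hx hxA, ContinuousLinearMap.comp_apply, hT x hx hxA, hshift, NNReal.coe_add]

theorem norm_le (hτ : 0 ≤ τ) (hT : IsSolutionSemigroup A T) (t : ℝ≥0) :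
    ‖T t‖ ≤ 2 * Real.exp ((2 * ‖A‖ + 1) * t) := by
  refine (T t).opNorm_le_bound (by positivity) fun φ => ?_
  obtain ⟨x, hx, rfl, hxA⟩ := exists_isFreeSolution A hτ φ
  rw [hT x hx hxA]
  exact hxA.norm_seg_le hτ t.coe_nonneg

theorem dist_apply_le (hτ : 0 ≤ τ) (hT : IsSolutionSemigroup A T) {t : ℝ≥0} (ht : τ ≤ t)
    (φ : EE τ n) (a b : Set.Icc (-τ) (0 : ℝ)) :
    dist (T t φ a) (T t φ b) ≤
      ‖A‖ * (2 * Real.exp ((2 * ‖A‖ + 1) * t) * ‖φ‖) * dist a b := by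
  obtain ⟨x, hx, rfl, hxA⟩ := exists_isFreeSolution A hτ φ
  have hmem (θ : Set.Icc (-τ) (0 : ℝ)) : t + (θ : ℝ) ∈ Set.Icc 0 (t : ℝ) :=
    ⟨by linarith [θ.2.1], by linarith [θ.2.2]⟩
  have hA (s : ℝ) (hs : s ∈ Set.Icc 0 (t : ℝ)) : ‖A (seg τ x hx s)‖ ≤
      ‖A‖ * (2 * Real.exp ((2 * ‖A‖ + 1) * t) * ‖seg τ x hx 0‖) :=
    A.le_of_opNorm_le_of_le le_rfl ((hxA.norm_seg_le hτ hs.1).trans (by gcongr; exact hs.2))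
  have hle := (convex_Icc (0 : ℝ) t).norm_image_sub_le_of_norm_hasDerivWithin_le
    (fun s hs => (hxA s hs.1).mono Set.Icc_subset_Ici_self)
    hA (hmem b) (hmem a)
  rw [hT x hx hxA]
  simpa [dist_eq_norm, seg_apply, Subtype.dist_eq] using hle

theorem isCompactOperator (hτ : 0 ≤ τ) (hT : IsSolutionSemigroup A T) {t : ℝ≥0} (ht : τ ≤ t) :
    IsCompactOperator (T t) := by
  set c := 2 * Real.exp ((2 * ‖A‖ + 1) * t)
  let J := ContinuousMap.isometryEquivBoundedOfCompact (Set.Icc (-τ) (0 : ℝ)) (Fin n → ℝ)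
  set S := T t '' Metric.closedBall 0 1
  have hJS : IsCompact (closure (J '' S)) := by
    refine BoundedContinuousFunction.arzela_ascoli (Metric.closedBall 0 c)
      (isCompact_closedBall _ _) _ ?_ ?_
    · rintro _ θ ⟨_, ⟨φ, hφ, rfl⟩, rfl⟩
      rw [mem_closedBall_zero_iff] at hφ ⊢
      refine ((T t φ).norm_coe_le_norm θ).trans ?_
      simpa using (T t).le_of_opNorm_le_of_le (hT.norm_le hτ _) hφ
    · refine Metric.equicontinuous_of_continuity_modulus (fun d => ‖A‖ * c * d)
        (by simpa using (continuous_const_mul (‖A‖ * c)).tendsto 0) _ ?_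
      rintro a b ⟨_, _, ⟨φ, hφ, rfl⟩, rfl⟩
      refine (hT.dist_apply_le hτ ht φ a b).trans ?_
      gcongr
      exact mul_le_of_le_one_right (by positivity) (mem_closedBall_zero_iff.1 hφ)
  refine (isCompactOperator_iff_isCompact_closure_image_closedBall (T t).toLinearMap one_pos).2 ?_
  rw [← J.toHomeomorph.isCompact_image, J.toHomeomorph.image_closure]
  exact hJS

end IsSolutionSemigroup

/-- Uniform exponential stability of `ẋ(t) = A x_t`. -/
def IsExpStable (A : EE τ n →L[ℝ] (Fin n → ℝ)) : Prop :=
  ∃ M > (0 : ℝ), ∃ ε > (0 : ℝ), ∀ (x : ℝ → Fin n → ℝ) (hx : Continuous x), IsFreeSolution A x hx →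
    ∀ t, 0 ≤ t → ‖seg τ x hx t‖ ≤ M * Real.exp (-ε * t) * ‖seg τ x hx 0‖

theorem isExpStable_of_tendsto (hτ : 0 ≤ τ)
    (h : ∀ (x : ℝ → Fin n → ℝ) (hx : Continuous x), IsFreeSolution A x hx →
      Tendsto (fun t => seg τ x hx t) atTop (𝓝 0)) : IsExpStable A := by
  obtain ⟨T, hT⟩ := exists_isSolutionSemigroup A hτ
  have hlim (φ : EE τ n) : Tendsto (fun t => T t φ) atTop (𝓝 0) := by
    obtain ⟨x, hx, rfl, hxA⟩ := exists_isFreeSolution A hτ φ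
    simp only [hT x hx hxA]
    exact (h x hx hxA).comp (NNReal.tendsto_coe_atTop.2 tendsto_id)
  obtain ⟨M, hM, ε, hε, hTM⟩ := exists_norm_le_exp_of_isCompactOperator (hT.comp hτ)
    (fun a => ⟨_, fun t ht => (hT.norm_le hτ t).trans
      (by gcongr : _ ≤ 2 * Real.exp ((2 * ‖A‖ + 1) * a))⟩) hlim
    (hT.isCompactOperator hτ (Real.le_coe_toNNReal τ))
  refine ⟨M, hM, ε, hε, fun x hx hxA t ht => ?_⟩
  lift t to ℝ≥0 using ht
  rw [← hT x hx hxA]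
  exact (T t).le_of_opNorm_le (hTM t) _

end LinearDecay

section Fourier

open FourierTransform

theorem fourier_toLp_ae_eq {V E : Type*} [NormedAddCommGroup V] [InnerProductSpace ℝ V]
    [FiniteDimensional ℝ V] [MeasurableSpace V] [BorelSpace V] [NormedAddCommGroup E]
    [InnerProductSpace ℂ E] [CompleteSpace E] {f : V → E} (h1 : Integrable f) (h2 : MemLp f 2) :
    ((𝓕 (h2.toLp f) : Lp E 2 (volume : Measure V)) : V → E) =ᵐ[volume] 𝓕 f := by
  refine ae_eq_of_integral_contDiff_smul_eq ((Lp.memLp _).locallyIntegrable (by norm_num))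
    (VectorFourier.fourierIntegral_continuous Real.continuous_fourierChar (L := innerₗ V)
      continuous_inner h1).locallyIntegrable fun g hg hgs => ?_
  have hgc : ContDiff ℝ (⊤ : ℕ∞) (fun x => (g x : ℂ)) := Complex.ofRealCLM.contDiff.comp hg
  have hgcs : HasCompactSupport (fun x => (g x : ℂ)) :=
    hgs.comp_left (g := Complex.ofReal) (by simp)
  let φ : SchwartzMap V ℂ := hgcs.toSchwartzMap hgc
  have hdistr := congrArg (· φ) (Lp.fourier_toTemperedDistribution_eq (h2.toLp f))
  simp only [TemperedDistribution.fourier_apply, Lp.toTemperedDistribution_apply,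
    SchwartzMap.fourier_coe] at hdistr
  have htoLp : ∫ x, 𝓕 (φ : V → ℂ) x • (h2.toLp f : V → E) x = ∫ x, 𝓕 (φ : V → ℂ) x • f x :=
    integral_congr_ae (h2.coeFn_toLp.mono fun x hx => congrArg (𝓕 (φ : V → ℂ) x • ·) hx)
  have hflip : ∫ x, 𝓕 (φ : V → ℂ) x • f x = ∫ x, φ x • 𝓕 f x := by
    have h := VectorFourier.integral_fourierIntegral_smul_eq_flip (μ := volume) (ν := volume)
      (L := innerₗ V) Real.continuous_fourierChar continuous_inner φ.integrable h1
    rwa [flip_innerₗ] at h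
  exact hdistr.symm.trans (htoLp.trans hflip)

/-- The functions on `ℝ` lying in `L¹ ∩ L²`: their Fourier transform is given by the integral, and
Plancherel's theorem applies to them. -/
structure MemL1L2 {E : Type*} [NormedAddCommGroup E] (f : ℝ → E) : Prop where
  integrable : Integrable f
  memLp : MemLp f 2

namespace MemL1L2

variable {E F : Type*} [NormedAddCommGroup E] [NormedAddCommGroup F] {f g : ℝ → E}

theorem add (hf : MemL1L2 f) (hg : MemL1L2 g) : MemL1L2 fun t => f t + g t :=
  ⟨hf.1.add hg.1, hf.2.add hg.2⟩

theorem clm_comp [NormedSpace ℝ E] [NormedSpace ℝ F] (L : E →L[ℝ] F) (hf : MemL1L2 f) :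
    MemL1L2 fun t => L (f t) :=
  ⟨L.integrable_comp hf.1, L.comp_memLp' hf.2⟩

theorem integral_inner_fourier [InnerProductSpace ℂ E] [CompleteSpace E] (hf : MemL1L2 f)
    (hg : MemL1L2 g) : Integrable (fun ω => inner ℂ (𝓕 f ω) (𝓕 g ω)) ∧
      ∫ ω, inner ℂ (𝓕 f ω) (𝓕 g ω) = ∫ t, inner ℂ (f t) (g t) := by
  have hf' := fourier_toLp_ae_eq hf.1 hf.2
  have hg' := fourier_toLp_ae_eq hg.1 hg.2
  have hae := hf'.comp₂ (inner ℂ) hg'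
  refine ⟨(L2.integrable_inner (𝕜 := ℂ) _ _).congr hae, ?_⟩
  calc ∫ ω, inner ℂ (𝓕 f ω) (𝓕 g ω) = inner ℂ (𝓕 (hf.2.toLp f)) (𝓕 (hg.2.toLp g)) :=
        (integral_congr_ae hae).symm.trans (L2.inner_def _ _).symm
    _ = inner ℂ (hf.2.toLp f) (hg.2.toLp g) := Lp.inner_fourier_eq _ _
    _ = ∫ t, inner ℂ (f t) (g t) := (L2.inner_def _ _).trans
        (integral_congr_ae (hf.2.coeFn_toLp.comp₂ (inner ℂ) hg.2.coeFn_toLp))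

end MemL1L2

theorem integrable_exp_neg_mul_abs {ε : ℝ} (hε : 0 < ε) :
    Integrable fun t : ℝ => Real.exp (-ε * |t|) := by
  rw [← integrableOn_univ, ← Set.Iic_union_Ioi (a := (0 : ℝ))]
  refine IntegrableOn.union ?_ ?_
  · refine (integrableOn_exp_mul_Iic hε 0).congr_fun (fun t ht => ?_) measurableSet_Iic
    simp only [abs_of_nonpos (Set.mem_Iic.1 ht), neg_mul_neg]
  · refine (integrableOn_exp_mul_Ioi (neg_lt_zero.2 hε) 0).congr_fun (fun t ht => ?_)
      measurableSet_Ioi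
    simp only [abs_of_pos (Set.mem_Ioi.1 ht)]

theorem memL1L2_of_norm_le_exp {E : Type*} [NormedAddCommGroup E] {f : ℝ → E}
    (hf : AEStronglyMeasurable f) {C ε : ℝ} (hε : 0 < ε)
    (h : ∀ t, ‖f t‖ ≤ C * Real.exp (-ε * |t|)) : MemL1L2 f := by
  have hsq (t : ℝ) : ‖‖f t‖ ^ 2‖ ≤ C ^ 2 * Real.exp (-(2 * ε) * |t|) := by
    rw [norm_pow, norm_norm]
    refine (pow_le_pow_left₀ (norm_nonneg _) (h t) 2).trans_eq ?_
    rw [mul_pow, ← Real.exp_nat_mul]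
    ring_nf
  refine ⟨((integrable_exp_neg_mul_abs hε).const_mul C).mono' hf (.of_forall h), ?_⟩
  rw [memLp_two_iff_integrable_sq_norm hf]
  exact ((integrable_exp_neg_mul_abs (mul_pos two_pos hε)).const_mul (C ^ 2)).mono'
    (hf.norm.pow 2) (.of_forall hsq)

/-- Two real functions are integrable with the same integral. This relation is stable under linear
combinations, which is how Plancherel's theorem is carried over to quadratic forms. -/
def SameIntegral (f g : ℝ → ℝ) : Prop :=
  Integrable f ∧ Integrable g ∧ ∫ t, f t = ∫ t, g t

theorem SameIntegral.add {f g f' g' : ℝ → ℝ} (h : SameIntegral f g) (h' : SameIntegral f' g') :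
    SameIntegral (fun t => f t + f' t) (fun t => g t + g' t) :=
  ⟨h.1.add h'.1, h.2.1.add h'.2.1, by
    rw [integral_add h.1 h'.1, integral_add h.2.1 h'.2.1, h.2.2, h'.2.2]⟩

theorem SameIntegral.const_mul {f g : ℝ → ℝ} (c : ℝ) (h : SameIntegral f g) :
    SameIntegral (fun t => c * f t) (fun t => c * g t) :=
  ⟨h.1.const_mul c, h.2.1.const_mul c, by rw [integral_const_mul, integral_const_mul, h.2.2]⟩

theorem SameIntegral.sum {ι : Type*} (s : Finset ι) {f g : ι → ℝ → ℝ}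
    (h : ∀ i, SameIntegral (f i) (g i)) :
    SameIntegral (fun t => ∑ i ∈ s, f i t) (fun t => ∑ i ∈ s, g i t) :=
  ⟨integrable_finsetSum _ fun i _ => (h i).1, integrable_finsetSum _ fun i _ => (h i).2.1, by
    rw [integral_finsetSum _ fun i _ => (h i).1, integral_finsetSum _ fun i _ => (h i).2.1]
    exact Finset.sum_congr rfl fun i _ => (h i).2.2⟩

theorem MemL1L2.sameIntegral_mul {f g : ℝ → ℝ} (hf : MemL1L2 f) (hg : MemL1L2 g) :
    SameIntegral (fun t => f t * g t) fun ω =>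
      (𝓕 (fun t => (f t : ℂ)) ω).re * (𝓕 (fun t => (g t : ℂ)) ω).re +
        (𝓕 (fun t => (f t : ℂ)) ω).im * (𝓕 (fun t => (g t : ℂ)) ω).im := by
  obtain ⟨hint, heq⟩ := (hf.clm_comp Complex.ofRealCLM).integral_inner_fourier
    (hg.clm_comp Complex.ofRealCLM)
  have hre (z w : ℂ) : z.re * w.re + z.im * w.im = (inner ℂ z w).re := by simp; ring
  have hmul (t : ℝ) : inner ℂ (f t : ℂ) (g t : ℂ) = ((f t * g t : ℝ) : ℂ) := by
    simp [mul_comm]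
  simp only [Complex.ofRealCLM_apply, hmul, integral_complex_ofReal] at hint heq
  simp only [hre]
  refine ⟨hf.memLp.integrable_mul hg.memLp, hint.re, ?_⟩
  exact (congrArg Complex.re heq).symm.trans (integral_re hint).symm

/-- The Fourier transform of an `ℝᵏ`-valued function, taken componentwise. -/
def fourierVec {k : ℕ} (f : ℝ → Fin k → ℝ) (ω : ℝ) (i : Fin k) : ℂ :=
  𝓕 (fun t => (f t i : ℂ)) ω

section Forms

variable {k l : ℕ} {f : ℝ → Fin k → ℝ} {g : ℝ → Fin l → ℝ}

theorem MemL1L2.apply (hf : MemL1L2 f) (i : Fin k) : MemL1L2 fun t => f t i :=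
  hf.clm_comp (ContinuousLinearMap.proj (R := ℝ) (φ := fun _ : Fin k => ℝ) i)

theorem MemL1L2.sameIntegral_dotProduct_mulVec (hf : MemL1L2 f) (hg : MemL1L2 g)
    (M : Matrix (Fin k) (Fin l) ℝ) :
    SameIntegral (fun t => f t ⬝ᵥ M.mulVec (g t)) fun ω =>
      (fun i => (fourierVec f ω i).re) ⬝ᵥ M.mulVec (fun j => (fourierVec g ω j).re) +
        (fun i => (fourierVec f ω i).im) ⬝ᵥ M.mulVec (fun j => (fourierVec g ω j).im) := by
  have h := SameIntegral.sum Finset.univ fun i => SameIntegral.sum Finset.univ fun j =>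
    ((hf.apply i).sameIntegral_mul (hg.apply j)).const_mul (M i j)
  convert h using 2
  · simp only [dotProduct, mulVec, Finset.mul_sum, mul_left_comm]
  · simp only [dotProduct, mulVec, Finset.mul_sum, ← Finset.sum_add_distrib, fourierVec]
    exact Finset.sum_congr rfl fun i _ => Finset.sum_congr rfl fun j _ => by ring

theorem MemL1L2.sameIntegral_dotProduct_self (hf : MemL1L2 f) :
    SameIntegral (fun t => f t ⬝ᵥ f t) fun ω => ∑ i, ‖fourierVec f ω i‖ ^ 2 := by
  convert hf.sameIntegral_dotProduct_mulVec hf 1 using 2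
  · rw [one_mulVec]
  · simp only [one_mulVec, dotProduct, ← Finset.sum_add_distrib, Complex.sq_norm,
      Complex.normSq_apply]

theorem MemL1L2.sameIntegral_Gq (hf : MemL1L2 f) (hg : MemL1L2 g)
    (G1 : Matrix (Fin k) (Fin k) ℝ) (G2 : Matrix (Fin k) (Fin l) ℝ)
    (G3 : Matrix (Fin l) (Fin l) ℝ) :
    SameIntegral (fun t => Gq G1 G2 G3 (f t) (g t)) fun ω =>
      GqC G1 G2 G3 (fourierVec f ω) (fourierVec g ω) := by
  convert ((hf.sameIntegral_dotProduct_mulVec hf G1).add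
    ((hf.sameIntegral_dotProduct_mulVec hg G2).const_mul 2)).add
    (hg.sameIntegral_dotProduct_mulVec hg G3) using 2
  · rfl
  · simp only [GqC, Gq]
    ring

end Forms

theorem fourier_deriv_of_hasDerivAt_off_countable {E : Type*} [NormedAddCommGroup E]
    [NormedSpace ℂ E] [CompleteSpace E] {f f' : ℝ → E} {S : Set ℝ} (hS : S.Countable)
    (hfc : Continuous f) (hd : ∀ t ∉ S, HasDerivAt f (f' t) t) (hf : Integrable f)
    (hf' : Integrable f') (h0 : Tendsto f (cocompact ℝ) (𝓝 0)) (ω : ℝ) :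
    𝓕 f' ω = (Complex.I * (2 * Real.pi * ω : ℝ)) • 𝓕 f ω := by
  set p : ℂ := Complex.I * (2 * Real.pi * ω : ℝ)
  have hF (g : ℝ → E) : 𝓕 g ω = ∫ t : ℝ, Complex.exp (-(p * t)) • g t := by
    rw [Real.fourier_real_eq_integral_exp_smul]
    congr! 4
    simp only [p]
    push_cast
    ring
  have hnorm (t : ℝ) : ‖Complex.exp (-(p * t))‖ = 1 := by simp [Complex.norm_exp, p]
  have hint {g : ℝ → E} (hg : Integrable g) :
      Integrable fun t : ℝ => Complex.exp (-(p * t)) • g t :=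
    hg.bdd_smul 1 (by fun_prop : Continuous _).aestronglyMeasurable
      (Eventually.of_forall fun t => (hnorm t).le)
  have hderiv (t : ℝ) (ht : t ∉ S) : HasDerivAt (fun t : ℝ => Complex.exp (-(p * t)) • f t)
      (Complex.exp (-(p * t)) • f' t - p • Complex.exp (-(p * t)) • f t) t := by
    have hexp := ((Complex.ofRealCLM.hasDerivAt (x := t)).const_mul p).neg.cexp
    refine (hexp.smul (hd t ht)).congr_deriv ?_
    simp [smul_smul, mul_comm, sub_eq_add_neg]
  have hint' := (hint hf').sub ((hint hf).smul p)
  have hlim : Tendsto (fun t : ℝ => Complex.exp (-(p * t)) • f t) (cocompact ℝ) (𝓝 0) :=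
    squeeze_zero_norm (fun t => by rw [norm_smul, hnorm, one_mul])
      (tendsto_zero_iff_norm_tendsto_zero.1 h0)
  have hftc := intervalIntegral_tendsto_integral hint' tendsto_neg_atTop_atBot tendsto_id
  have hbdry := (hlim.mono_left atTop_le_cocompact).sub
    ((hlim.mono_left atBot_le_cocompact).comp tendsto_neg_atTop_atBot)
  have hzero := tendsto_nhds_unique hftc (hbdry.congr fun T =>
    (integral_eq_of_hasDerivAt_off_countable _ _ hS (by fun_prop : Continuous _).continuousOn
      (fun t ht => hderiv t ht.2) hint'.intervalIntegrable).symm)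
  rw [integral_sub' (hint hf') ((hint hf).smul p), sub_zero] at hzero
  simp only [Pi.smul_apply, integral_smul, ← hF] at hzero
  exact sub_eq_zero.1 hzero

end Fourier

section Symbols

open FourierTransform

/-- `M` is the matrix symbol `M(p) = ∫ e^{pθ} dl(θ)` of the operator `L φ = ∫ dl(θ) φ(θ)`. It is
encoded through the action of `L` on exponentials, since `L` acts on real functions only. -/
def IsSymbol {k : ℕ} (L : EE τ n →L[ℝ] (Fin k → ℝ)) (M : ℂ → Matrix (Fin k) (Fin n) ℂ) : Prop :=
  ∀ (p : ℂ) (w : Fin n → ℂ), L (expSegRe τ p w) = fun i => ((M p).mulVec w i).re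

theorem expSegRe_apply (p : ℂ) (w : Fin n → ℂ) (θ : Set.Icc (-τ) (0 : ℝ)) (i : Fin n) :
    expSegRe τ p w θ i = (Complex.exp (p * (θ : ℝ)) * w i).re := rfl

theorem continuous_expSegRe (w : Fin n → ℂ) : Continuous fun p => expSegRe τ p w :=
  ContinuousMap.continuous_of_continuous_uncurry _ <| continuous_pi fun i =>
    (by fun_prop : Continuous fun q : ℂ × Set.Icc (-τ) (0 : ℝ) =>
      (Complex.exp (q.1 * ((q.2 : ℝ) : ℂ)) * w i).re)

theorem norm_expSegRe_le {p : ℂ} (hp : p.re = 0) (w : Fin n → ℂ) :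
    ‖expSegRe τ p w‖ ≤ ‖w‖ := by
  refine (ContinuousMap.norm_le _ (norm_nonneg _)).2 fun θ =>
    (pi_norm_le_iff_of_nonneg (norm_nonneg _)).2 fun i => ?_
  have hexp : ‖Complex.exp (p * (θ : ℝ))‖ = 1 := by simp [Complex.norm_exp, hp]
  refine (Complex.abs_re_le_norm _).trans ?_
  rw [norm_mul, hexp, one_mul]
  exact norm_le_pi_norm w i

variable {k : ℕ} {L : EE τ n →L[ℝ] (Fin k → ℝ)} {M : ℂ → Matrix (Fin k) (Fin n) ℂ}

namespace IsSymbol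

theorem re_mul_mulVec (hL : IsSymbol L M) (c p : ℂ) (w : Fin n → ℂ) (i : Fin k) :
    (c * (M p).mulVec w i).re = L (expSegRe τ p (c • w)) i := by
  simp [hL p, mulVec_smul]

theorem continuous (hL : IsSymbol L M) : Continuous M := by
  refine continuous_matrix fun i j => ?_
  have hentry (p : ℂ) : M p i j = (L (expSegRe τ p (Pi.single j 1)) i : ℂ) +
      (L (expSegRe τ p (-Complex.I • Pi.single j 1)) i : ℂ) * Complex.I := by
    rw [← hL.re_mul_mulVec, hL p, mulVec_single_one]
    simp [Complex.re_add_im]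
  have hc (w : Fin n → ℂ) : Continuous fun p => (L (expSegRe τ p w) i : ℂ) :=
    Complex.continuous_ofReal.comp
      ((continuous_apply i).comp (L.continuous.comp (continuous_expSegRe w)))
  simp only [hentry]
  exact (hc _).add ((hc _).mul continuous_const)

theorem norm_mulVec_le (hL : IsSymbol L M) {p : ℂ} (hp : p.re = 0) (w : Fin n → ℂ) :
    ‖(M p).mulVec w‖ ≤ ‖L‖ * ‖w‖ := by
  refine (pi_norm_le_iff_of_nonneg (by positivity)).2 fun i => ?_
  obtain ⟨c, hc, hcz⟩ := Complex.exists_norm_eq_mul_self ((M p).mulVec w i)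
  calc ‖(M p).mulVec w i‖ = L (expSegRe τ p (c • w)) i := by
        rw [← hL.re_mul_mulVec, ← hcz, Complex.ofReal_re]
    _ ≤ ‖L (expSegRe τ p (c • w))‖ := (le_abs_self _).trans (norm_le_pi_norm (L _) i)
    _ ≤ ‖L‖ * ‖c • w‖ := (L.le_opNorm _).trans (by gcongr; exact norm_expSegRe_le hp _)
    _ = ‖L‖ * ‖w‖ := by rw [norm_smul, hc, one_mul]

end IsSymbol

theorem re_mul_fourier_clm {E : Type*} [NormedAddCommGroup E] [NormedSpace ℝ E] [CompleteSpace E]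
    {F : ℝ → E} (hF : Integrable F) (T : E →L[ℝ] ℝ) (c : ℂ) (ω : ℝ) :
    (c * 𝓕 (fun t => (T (F t) : ℂ)) ω).re =
      T (∫ t, (c * Real.fourierChar (-(t * ω))).re • F t) := by
  have hchar : Continuous fun t : ℝ => (c * Real.fourierChar (-(t * ω)) : ℂ) := by
    have := Real.continuous_fourierChar
    fun_prop
  have hnorm (t : ℝ) : ‖(c * Real.fourierChar (-(t * ω)) : ℂ)‖ = ‖c‖ := by
    rw [norm_mul, Circle.norm_coe, mul_one]
  have hTF : Integrable fun t => (T (F t) : ℂ) := (T.integrable_comp hF).ofReal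
  have hint : Integrable fun t => (c * Real.fourierChar (-(t * ω)) : ℂ) * (T (F t) : ℂ) :=
    hTF.bdd_mul hchar.aestronglyMeasurable (.of_forall fun t => (hnorm t).le)
  have hintF : Integrable fun t => (c * Real.fourierChar (-(t * ω)) : ℂ).re • F t :=
    hF.bdd_smul ‖c‖ (Complex.continuous_re.comp hchar).aestronglyMeasurable
      (.of_forall fun t => (Complex.abs_re_le_norm _).trans (hnorm t).le)
  have hpull : c * 𝓕 (fun t => (T (F t) : ℂ)) ω =
      ∫ t, (c * Real.fourierChar (-(t * ω)) : ℂ) * (T (F t) : ℂ) := by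
    simp only [Real.fourier_real_eq, Circle.smul_def, smul_eq_mul, mul_assoc,
      integral_const_mul]
  rw [hpull, ← T.integral_comp_comm hintF]
  refine (integral_re hint).symm.trans (integral_congr_ae (.of_forall fun t => ?_))
  simp only [map_smul, smul_eq_mul]
  exact Complex.re_mul_ofReal _ _

theorem fourier_comp_add_right {E : Type*} [NormedAddCommGroup E] [NormedSpace ℂ E] (f : ℝ → E)
    (a ω : ℝ) : 𝓕 (fun t => f (t + a)) ω =
      Complex.exp (Complex.I * (2 * Real.pi * ω : ℝ) * a) • 𝓕 f ω := by
  refine (congrFun (VectorFourier.fourierIntegral_comp_add_right Real.fourierChar volume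
    (innerₗ ℝ) f a) ω).trans ?_
  rw [Circle.smul_def, Real.fourierChar_apply, innerₗ_apply_apply]
  refine congrArg (fun z => Complex.exp z • 𝓕 f ω) ?_
  have hinner : inner ℝ a ω = ω * a := rfl
  rw [hinner]
  push_cast
  ring

/-- Both sides are tested against all `c : ℂ`: the real part of `c` times the left side is `L`
applied to a Bochner integral of segments, and that integral is an exponential segment. -/
theorem IsSymbol.fourierVec_apply_seg (hL : IsSymbol L M) {y : ℝ → Fin n → ℝ} (hy : Continuous y)
    (hint : Integrable (seg τ y hy)) (ω : ℝ) :
    fourierVec (fun t => L (seg τ y hy t)) ω =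
      (M (Complex.I * (2 * Real.pi * ω : ℝ))).mulVec (fourierVec y ω) := by
  set p : ℂ := Complex.I * (2 * Real.pi * ω : ℝ)
  have hseg (c : ℂ) : ∫ t, (c * Real.fourierChar (-(t * ω))).re • seg τ y hy t =
      expSegRe τ p (c • fourierVec y ω) := by
    ext θ i
    have h := re_mul_fourier_clm hint
      (.proj i ∘L ContinuousMap.evalCLM ℝ θ : EE τ n →L[ℝ] ℝ) c ω
    have hshift := fourier_comp_add_right (fun t => (y t i : ℂ)) θ ω
    refine h.symm.trans ?_
    rw [expSegRe_apply, Pi.smul_apply, smul_eq_mul, mul_left_comm]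
    exact congrArg (fun z => (c * z).re) hshift
  have htest (c : ℂ) (i : Fin k) : (c * fourierVec (fun t => L (seg τ y hy t)) ω i).re =
      (c * (M p).mulVec (fourierVec y ω) i).re := by
    rw [hL.re_mul_mulVec, ← hseg]
    exact re_mul_fourier_clm hint (.proj i ∘L L : EE τ n →L[ℝ] ℝ) c ω
  refine funext fun i => Complex.ext (by simpa using htest 1 i) ?_
  simpa using htest (-Complex.I) i

end Symbols

section FrequencyCondition

theorem norm_sq_le_sum_norm_sq {ι E : Type*} [Fintype ι] [SeminormedAddCommGroup E] (v : ι → E) :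
    ‖v‖ ^ 2 ≤ ∑ i, ‖v i‖ ^ 2 := by
  refine (Real.le_sqrt (norm_nonneg _) (by positivity)).1 ?_
  refine (pi_norm_le_iff_of_nonneg (Real.sqrt_nonneg _)).2 fun i => Real.le_sqrt_of_sq_le ?_
  exact Finset.single_le_sum (f := fun i => ‖v i‖ ^ 2) (fun i _ => by positivity)
    (Finset.mem_univ i)

theorem sum_norm_sq_le {ι E : Type*} [Fintype ι] [SeminormedAddCommGroup E] (v : ι → E) :
    ∑ i, ‖v i‖ ^ 2 ≤ Fintype.card ι * ‖v‖ ^ 2 := by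
  rw [← nsmul_eq_mul]
  exact Finset.sum_le_card_nsmul _ _ _ fun i _ => by gcongr; exact norm_le_pi_norm v i

theorem exists_norm_mulVec_le {𝕜 : Type*} [NontriviallyNormedField 𝕜] [CompleteSpace 𝕜] {k l : ℕ}
    (M : Matrix (Fin k) (Fin l) 𝕜) : ∃ b, 0 ≤ b ∧ ∀ v, ‖M.mulVec v‖ ≤ b * ‖v‖ :=
  ⟨_, norm_nonneg _, (LinearMap.toContinuousLinearMap M.mulVecLin).le_opNorm⟩

variable {m r : ℕ} {G1 : Matrix (Fin r) (Fin r) ℝ} {G2 : Matrix (Fin r) (Fin m) ℝ}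
  {G3 : Matrix (Fin m) (Fin m) ℝ}

theorem Gq_smul (c : ℝ) (σ : Fin r → ℝ) (ξ : Fin m → ℝ) :
    Gq G1 G2 G3 (c • σ) (c • ξ) = c ^ 2 * Gq G1 G2 G3 σ ξ := by
  simp only [Gq, mulVec_smul, smul_dotProduct, dotProduct_smul, smul_eq_mul]
  ring

theorem GqC_smul (c : ℝ) (σ : Fin r → ℂ) (ξ : Fin m → ℂ) :
    GqC G1 G2 G3 (c • σ) (c • ξ) = c ^ 2 * GqC G1 G2 G3 σ ξ := by
  rw [GqC, GqC, mul_add, ← Gq_smul, ← Gq_smul]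
  congr 2 <;> ext i <;> simp

theorem Gq_add_smul_one (a b : ℝ) (σ : Fin r → ℝ) (ξ : Fin m → ℝ) :
    Gq (G1 + a • 1) G2 (G3 + b • 1) σ ξ =
      Gq G1 G2 G3 σ ξ + a * (σ ⬝ᵥ σ) + b * (ξ ⬝ᵥ ξ) := by
  simp only [Gq, add_mulVec, smul_mulVec, one_mulVec, dotProduct_add, dotProduct_smul,
    smul_eq_mul]
  ring

theorem GqC_add_smul_one (a b : ℝ) (σ : Fin r → ℂ) (ξ : Fin m → ℂ) :
    GqC (G1 + a • 1) G2 (G3 + b • 1) σ ξ =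
      GqC G1 G2 G3 σ ξ + a * ∑ i, ‖σ i‖ ^ 2 + b * ∑ i, ‖ξ i‖ ^ 2 := by
  simp only [GqC, Gq_add_smul_one, Complex.sq_norm, Complex.normSq_apply, Finset.sum_add_distrib,
    dotProduct]
  ring

theorem continuous_GqC :
    Continuous fun q : (Fin r → ℂ) × (Fin m → ℂ) => GqC G1 G2 G3 q.1 q.2 := by
  simp only [GqC, Gq, dotProduct, mulVec]
  fun_prop

theorem exists_le_neg_mul_sq_norm {X E : Type*} [TopologicalSpace X] [NormedAddCommGroup E]
    [NormedSpace ℝ E] [ProperSpace E] {K : Set X} (hK : IsCompact K) {S : Set (X × E)}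
    (hS : IsClosed S) (hSsmul : ∀ x v (c : ℝ), (x, v) ∈ S → (x, c • v) ∈ S) {f : X × E → ℝ}
    (hf : Continuous f) (hfsmul : ∀ x v (c : ℝ), f (x, c • v) = c ^ 2 * f (x, v))
    (hneg : ∀ x ∈ K, ∀ v ≠ 0, (x, v) ∈ S → f (x, v) < 0) :
    ∃ δ > (0 : ℝ), ∀ x ∈ K, ∀ v, (x, v) ∈ S → f (x, v) ≤ -δ * ‖v‖ ^ 2 := by
  have hcpt : IsCompact ((K ×ˢ Metric.sphere 0 1) ∩ S) :=
    (hK.prod (isCompact_sphere (0 : E) 1)).inter_right hS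
  obtain ⟨δ, hδ, hsphere⟩ : ∃ δ > (0 : ℝ), ∀ z ∈ (K ×ˢ Metric.sphere 0 1) ∩ S, f z ≤ -δ := by
    rcases Set.eq_empty_or_nonempty ((K ×ˢ Metric.sphere (0 : E) 1) ∩ S) with h | h
    · exact ⟨1, one_pos, by simp [h]⟩
    · obtain ⟨z, ⟨hzK, hzS⟩, hmax⟩ := hcpt.exists_isMaxOn h hf.continuousOn
      refine ⟨-f z, neg_pos.2 (hneg z.1 hzK.1 z.2 ?_ hzS),
        fun w hw => (neg_neg (f z)).symm ▸ hmax hw⟩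
      exact ne_zero_of_mem_unit_sphere ⟨z.2, hzK.2⟩
  refine ⟨δ, hδ, fun x hx v hv => ?_⟩
  rcases eq_or_ne v 0 with rfl | hv0
  · have h0 : f (x, 0) = 0 := by simpa using hfsmul x 0 0
    simp [h0]
  · have hnorm : 0 < ‖v‖ := norm_pos_iff.2 hv0
    have hunit := hsphere (x, ‖v‖⁻¹ • v)
      ⟨⟨hx, mem_sphere_zero_iff_norm.2 (norm_smul_inv_norm hv0)⟩, hSsmul x v _ hv⟩
    rw [hfsmul, inv_pow, inv_mul_le_iff₀ (pow_pos hnorm 2)] at hunit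
    linarith

/-- The frequency inequality `𝒢^ℂ(-W(p)ξ, ξ) ≤ -δ|ξ|²` at a single frequency, where
`P = α(p) - p` and `Γ = γ(p)`. The value `W(p)ξ = ΓP⁻¹Bξ` is written as `Γu` with `Pu = Bξ`. -/
def FrequencyCondition (P : Matrix (Fin n) (Fin n) ℂ) (Γ : Matrix (Fin r) (Fin n) ℂ)
    (B : Matrix (Fin n) (Fin m) ℝ) (G1 : Matrix (Fin r) (Fin r) ℝ) (G2 : Matrix (Fin r) (Fin m) ℝ)
    (G3 : Matrix (Fin m) (Fin m) ℝ) : Prop :=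
  ∃ δ > (0 : ℝ), ∀ (ξ : Fin m → ℂ) (u : Fin n → ℂ),
    P.mulVec u = (B.map (fun x : ℝ => (x : ℂ))).mulVec ξ →
      GqC G1 G2 G3 (fun i => -(Γ.mulVec u i)) ξ ≤ -δ * ∑ i, ‖ξ i‖ ^ 2

/-- The frequency inequality on the imaginary axis, uniform in the frequency and strict in the
Fourier transforms `u` and `iωu` of a solution and of its derivative. -/
def UniformFrequencyCondition (α : ℂ → Matrix (Fin n) (Fin n) ℂ)
    (γ : ℂ → Matrix (Fin r) (Fin n) ℂ) (B : Matrix (Fin n) (Fin m) ℝ)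
    (G1 : Matrix (Fin r) (Fin r) ℝ) (G2 : Matrix (Fin r) (Fin m) ℝ)
    (G3 : Matrix (Fin m) (Fin m) ℝ) (κ : ℝ) : Prop :=
  ∀ (ω : ℝ) (ξ : Fin m → ℂ) (u : Fin n → ℂ),
    (α (Complex.I * ω) - (Complex.I * ω) • 1).mulVec u =
        (B.map (fun x : ℝ => (x : ℂ))).mulVec ξ →
      GqC G1 G2 G3 (fun i => -((γ (Complex.I * ω)).mulVec u i)) ξ +
        κ * (∑ i, ‖u i‖ ^ 2 + ∑ i, ‖((Complex.I * ω) • u) i‖ ^ 2) ≤ 0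

variable {A : EE τ n →L[ℝ] (Fin n → ℝ)} {C : EE τ n →L[ℝ] (Fin r → ℝ)}
  {B : Matrix (Fin n) (Fin m) ℝ} {α : ℂ → Matrix (Fin n) (Fin n) ℂ}
  {γ : ℂ → Matrix (Fin r) (Fin n) ℂ}

theorem sum_norm_sq_symbol_mulVec_le (hC : IsSymbol C γ) (ω : ℝ) (u : Fin n → ℂ) :
    ∑ i, ‖(γ (Complex.I * ω)).mulVec u i‖ ^ 2 ≤ r * ‖C‖ ^ 2 * ‖u‖ ^ 2 := by
  refine (sum_norm_sq_le _).trans ?_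
  rw [Fintype.card_fin, mul_assoc, ← mul_pow]
  gcongr
  exact hC.norm_mulVec_le (by simp) u

theorem exists_norm_smul_le_of_mulVec_eq (hA : IsSymbol A α) (B : Matrix (Fin n) (Fin m) ℝ) :
    ∃ b, 0 ≤ b ∧ ∀ (ω : ℝ) (ξ : Fin m → ℂ) (u : Fin n → ℂ),
      (α (Complex.I * ω) - (Complex.I * ω) • 1).mulVec u =
        (B.map (fun x : ℝ => (x : ℂ))).mulVec ξ →
      ‖(Complex.I * ω) • u‖ ≤ ‖A‖ * ‖u‖ + b * ‖ξ‖ := by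
  obtain ⟨b, hb0, hb⟩ := exists_norm_mulVec_le (B.map (fun x : ℝ => (x : ℂ)))
  refine ⟨b, hb0, fun ω ξ u hu => ?_⟩
  have hsplit : (Complex.I * ω) • u =
      (α (Complex.I * ω)).mulVec u - (B.map (fun x : ℝ => (x : ℂ))).mulVec ξ := by
    rw [← hu, sub_mulVec, smul_mulVec, one_mulVec, sub_sub_cancel]
  rw [hsplit]
  exact (norm_sub_le _ _).trans (add_le_add (hA.norm_mulVec_le (by simp) u) (hb ξ))

theorem exists_norm_le_of_le_abs (hA : IsSymbol A α) (B : Matrix (Fin n) (Fin m) ℝ) {η : ℝ}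
    (hη : 0 < η) :
    ∃ R, ∀ (ω : ℝ) (ξ : Fin m → ℂ) (u : Fin n → ℂ), R ≤ |ω| →
      (α (Complex.I * ω) - (Complex.I * ω) • 1).mulVec u =
        (B.map (fun x : ℝ => (x : ℂ))).mulVec ξ → ‖u‖ ≤ η * ‖ξ‖ := by
  obtain ⟨b, hb0, hb⟩ := exists_norm_smul_le_of_mulVec_eq hA B
  refine ⟨‖A‖ + (b + 1) / η, fun ω ξ u hω hu => ?_⟩
  have hωu : |ω| * ‖u‖ ≤ ‖A‖ * ‖u‖ + b * ‖ξ‖ := by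
    simpa [norm_smul] using hb ω ξ u hu
  have hbu : (b + 1) / η * ‖u‖ ≤ (b + 1) * ‖ξ‖ := by
    have := mul_le_mul_of_nonneg_right hω (norm_nonneg u)
    linarith [norm_nonneg ξ]
  have hb1 : (b + 1) / η * ‖u‖ = (b + 1) * (‖u‖ / η) := by ring
  rw [hb1, mul_le_mul_iff_right₀ (by positivity), div_le_iff₀ hη] at hbu
  linarith

theorem exists_GqC_le_of_abs_le (hA : IsSymbol A α) (hC : IsSymbol C γ)
    (hdet : ∀ ω : ℝ, (α (Complex.I * ω) - (Complex.I * ω) • 1).det ≠ 0)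
    (hfreq : ∀ ω : ℝ, FrequencyCondition (α (Complex.I * ω) - (Complex.I * ω) • 1)
      (γ (Complex.I * ω)) B G1 G2 G3) (R : ℝ) :
    ∃ δ > (0 : ℝ), ∀ (ω : ℝ) (ξ : Fin m → ℂ) (u : Fin n → ℂ), |ω| ≤ R →
      (α (Complex.I * ω) - (Complex.I * ω) • 1).mulVec u =
        (B.map (fun x : ℝ => (x : ℂ))).mulVec ξ →
      GqC G1 G2 G3 (fun i => -((γ (Complex.I * ω)).mulVec u i)) ξ ≤ -δ * ‖(u, ξ)‖ ^ 2 := by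
  have hαc := hA.continuous
  have hγc := hC.continuous
  let S : Set (ℝ × ((Fin n → ℂ) × (Fin m → ℂ))) :=
    {z | (α (Complex.I * z.1) - (Complex.I * z.1) • 1).mulVec z.2.1 =
      (B.map (fun x : ℝ => (x : ℂ))).mulVec z.2.2}
  let f : ℝ × ((Fin n → ℂ) × (Fin m → ℂ)) → ℝ := fun z =>
    GqC G1 G2 G3 (fun i => -((γ (Complex.I * z.1)).mulVec z.2.1 i)) z.2.2
  have hS : IsClosed S := isClosed_eq
    (Continuous.matrix_mulVec (by fun_prop) (by fun_prop))
    (Continuous.matrix_mulVec (by fun_prop) (by fun_prop))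
  have hSsmul (ω v) (c : ℝ) (h : (ω, v) ∈ S) : (ω, c • v) ∈ S := by
    simp only [S, Set.mem_ofPred_eq, Prod.smul_fst, Prod.smul_snd, mulVec_smul] at h ⊢
    rw [h]
  have hf : Continuous f := by
    have hγu : Continuous fun z : ℝ × ((Fin n → ℂ) × (Fin m → ℂ)) =>
        (γ (Complex.I * z.1)).mulVec z.2.1 :=
      Continuous.matrix_mulVec (by fun_prop) (by fun_prop)
    exact continuous_GqC.comp (hγu.neg.prodMk (by fun_prop))
  have hfsmul (ω v) (c : ℝ) : f (ω, c • v) = c ^ 2 * f (ω, v) := by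
    simp only [f, Prod.smul_fst, Prod.smul_snd, mulVec_smul]
    rw [← GqC_smul]
    congr 1
    ext i
    simp
  have hneg (ω v) (hv : v ≠ 0) (h : (ω, v) ∈ S) : f (ω, v) < 0 := by
    obtain ⟨δ, hδ, hle⟩ := hfreq ω
    have hξ : v.2 ≠ 0 := fun hξ => hv <| Prod.ext
      (eq_zero_of_mulVec_eq_zero (hdet ω) (h.trans (by rw [hξ, mulVec_zero]))) hξ
    have hpos : 0 < ∑ i, ‖v.2 i‖ ^ 2 :=
      (pow_pos (norm_pos_iff.2 hξ) 2).trans_le (norm_sq_le_sum_norm_sq _)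
    exact (hle v.2 v.1 h).trans_lt (mul_neg_of_neg_of_pos (neg_neg_of_pos hδ) hpos)
  obtain ⟨δ, hδ, hle⟩ := exists_le_neg_mul_sq_norm (isCompact_Icc (a := -R) (b := R)) hS hSsmul hf
    hfsmul fun ω _ => hneg ω
  exact ⟨δ, hδ, fun ω ξ u hω hu => hle ω (abs_le.1 hω) (u, ξ) hu⟩

theorem exists_GqC_add_le (hA : IsSymbol A α) (hC : IsSymbol C γ)
    (hdet : ∀ ω : ℝ, (α (Complex.I * ω) - (Complex.I * ω) • 1).det ≠ 0)
    (hfreq : ∀ ω : ℝ, FrequencyCondition (α (Complex.I * ω) - (Complex.I * ω) • 1)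
      (γ (Complex.I * ω)) B G1 G2 G3) {L : ℝ} (hL : 0 ≤ L) :
    ∃ δ > (0 : ℝ), ∀ (ω : ℝ) (ξ : Fin m → ℂ) (u : Fin n → ℂ),
      (α (Complex.I * ω) - (Complex.I * ω) • 1).mulVec u =
        (B.map (fun x : ℝ => (x : ℂ))).mulVec ξ →
      GqC G1 G2 G3 (fun i => -((γ (Complex.I * ω)).mulVec u i)) ξ +
        δ * (L * ∑ i, ‖(γ (Complex.I * ω)).mulVec u i‖ ^ 2 - ∑ i, ‖ξ i‖ ^ 2) ≤
          -(δ / 2) * ‖(u, ξ)‖ ^ 2 := by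
  set θ : ℝ := L * (r * ‖C‖ ^ 2) + 1 with hθ
  have hθ1 : 1 ≤ θ := le_add_of_nonneg_left (by positivity)
  have hθ0 : 0 < θ := one_pos.trans_le hθ1
  obtain ⟨R, hhigh⟩ := exists_norm_le_of_le_abs hA B (η := 1 / (2 * θ)) (by positivity)
  obtain ⟨δ₀, hδ₀, hlow⟩ := exists_GqC_le_of_abs_le hA hC hdet hfreq R
  obtain ⟨δ, hδ, rfl⟩ : ∃ δ > 0, δ₀ = 2 * δ * θ :=
    ⟨δ₀ / (2 * θ), by positivity, by field_simp⟩
  refine ⟨δ, hδ, fun ω ξ u hu => ?_⟩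
  have hγ : L * ∑ i, ‖(γ (Complex.I * ω)).mulVec u i‖ ^ 2 ≤ (θ - 1) * ‖u‖ ^ 2 := by
    rw [hθ, add_sub_cancel_right, mul_assoc]
    exact mul_le_mul_of_nonneg_left (sum_norm_sq_symbol_mulVec_le hC ω u) hL
  have hξ := norm_sq_le_sum_norm_sq ξ
  rcases le_total |ω| R with hω | hω
  · have hN : (θ - 1) * ‖u‖ ^ 2 ≤ (θ - 1) * ‖(u, ξ)‖ ^ 2 := by
      gcongr
      exact norm_fst_le (u, ξ)
    have hS : L * ∑ i, ‖(γ (Complex.I * ω)).mulVec u i‖ ^ 2 - ∑ i, ‖ξ i‖ ^ 2 ≤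
        (θ - 1) * ‖(u, ξ)‖ ^ 2 := by linarith [sq_nonneg ‖ξ‖]
    have hθN : 0 ≤ δ * θ * ‖(u, ξ)‖ ^ 2 := by positivity
    have hδN : 0 ≤ δ * ‖(u, ξ)‖ ^ 2 := by positivity
    linarith [hlow ω ξ u hω hu, mul_le_mul_of_nonneg_left hS hδ.le]
  · have hu2 : 2 * θ * ‖u‖ ≤ ‖ξ‖ := by
      have := hhigh ω ξ u hω hu
      rwa [one_div, ← div_eq_inv_mul, le_div_iff₀' (by positivity)] at this
    have hN : ‖(u, ξ)‖ ≤ ‖ξ‖ := max_le (by nlinarith [norm_nonneg u]) le_rfl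
    have hN2 : ‖(u, ξ)‖ ^ 2 ≤ ‖ξ‖ ^ 2 := by gcongr
    have hsq : (2 * θ * ‖u‖) ^ 2 ≤ ‖ξ‖ ^ 2 := by gcongr
    have hS : L * ∑ i, ‖(γ (Complex.I * ω)).mulVec u i‖ ^ 2 - ∑ i, ‖ξ i‖ ^ 2 ≤
        -(1 / 2) * ‖(u, ξ)‖ ^ 2 := by nlinarith [sq_nonneg ‖u‖]
    obtain ⟨ε, hε, hle⟩ := hfreq ω
    have hneg : GqC G1 G2 G3 (fun i => -((γ (Complex.I * ω)).mulVec u i)) ξ ≤ 0 :=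
      (hle ξ u hu).trans (mul_nonpos_of_nonpos_of_nonneg (by linarith) (by positivity))
    linarith [mul_le_mul_of_nonneg_left hS hδ.le]

theorem exists_uniformFrequencyCondition (hA : IsSymbol A α) (hC : IsSymbol C γ)
    (hdet : ∀ ω : ℝ, (α (Complex.I * ω) - (Complex.I * ω) • 1).det ≠ 0)
    (hfreq : ∀ ω : ℝ, FrequencyCondition (α (Complex.I * ω) - (Complex.I * ω) • 1)
      (γ (Complex.I * ω)) B G1 G2 G3) {L : ℝ} (hL : 0 ≤ L) :
    ∃ δ > (0 : ℝ), ∃ κ > (0 : ℝ), UniformFrequencyCondition α γ B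
      (G1 + (δ * L) • 1 + κ • 1) G2 (G3 + (-δ) • 1 + κ • 1) κ := by
  obtain ⟨δ, hδ, hle⟩ := exists_GqC_add_le hA hC hdet hfreq hL
  obtain ⟨b, hb0, hb⟩ := exists_norm_smul_le_of_mulVec_eq hA B
  set D : ℝ := n + n * (‖A‖ + b) ^ 2 + r * ‖C‖ ^ 2 + m + 1
  have hD : 0 < D := by positivity
  refine ⟨δ, hδ, δ / (2 * D), by positivity, fun ω ξ u hu => ?_⟩
  have hu' : ‖u‖ ≤ ‖(u, ξ)‖ := norm_fst_le (u, ξ)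
  have hξ' : ‖ξ‖ ≤ ‖(u, ξ)‖ := norm_snd_le (u, ξ)
  have hderiv : ‖(Complex.I * ω) • u‖ ≤ (‖A‖ + b) * ‖(u, ξ)‖ :=
    (hb ω ξ u hu).trans (by rw [add_mul]; gcongr)
  have hsum : ∑ i, ‖u i‖ ^ 2 + ∑ i, ‖((Complex.I * ω) • u) i‖ ^ 2 +
      ∑ i, ‖(γ (Complex.I * ω)).mulVec u i‖ ^ 2 + ∑ i, ‖ξ i‖ ^ 2 ≤ D * ‖(u, ξ)‖ ^ 2 := by
    have h₁ : ∑ i, ‖u i‖ ^ 2 ≤ n * ‖(u, ξ)‖ ^ 2 :=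
      (sum_norm_sq_le u).trans (by rw [Fintype.card_fin]; gcongr)
    have h₂ : ∑ i, ‖((Complex.I * ω) • u) i‖ ^ 2 ≤ n * (‖A‖ + b) ^ 2 * ‖(u, ξ)‖ ^ 2 :=
      (sum_norm_sq_le _).trans (by rw [Fintype.card_fin, mul_assoc, ← mul_pow]; gcongr)
    have h₃ : ∑ i, ‖(γ (Complex.I * ω)).mulVec u i‖ ^ 2 ≤ r * ‖C‖ ^ 2 * ‖(u, ξ)‖ ^ 2 :=
      (sum_norm_sq_symbol_mulVec_le hC ω u).trans (by gcongr)
    have h₄ : ∑ i, ‖ξ i‖ ^ 2 ≤ m * ‖(u, ξ)‖ ^ 2 :=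
      (sum_norm_sq_le ξ).trans (by rw [Fintype.card_fin]; gcongr)
    linarith [sq_nonneg ‖(u, ξ)‖]
  have hκ : δ / (2 * D) * (D * ‖(u, ξ)‖ ^ 2) = δ / 2 * ‖(u, ξ)‖ ^ 2 := by field_simp
  rw [GqC_add_smul_one, GqC_add_smul_one]
  simp only [norm_neg]
  linarith [hle ω ξ u hu,
    mul_le_mul_of_nonneg_left hsum (by positivity : 0 ≤ δ / (2 * D))]

end FrequencyCondition

section PlancherelInequality

open FourierTransform

theorem fourierVec_add {k : ℕ} {f g : ℝ → Fin k → ℝ} (hf : Integrable f) (hg : Integrable g)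
    (ω : ℝ) : fourierVec (fun t => f t + g t) ω = fourierVec f ω + fourierVec g ω := by
  funext i
  have hfi : Integrable fun t => (f t i : ℂ) := (hf.eval i).ofReal
  have hgi : Integrable fun t => (g t i : ℂ) := (hg.eval i).ofReal
  have h := congrFun (VectorFourier.fourierIntegral_add Real.continuous_fourierChar
    (L := innerₗ ℝ) continuous_inner hfi hgi) ω
  refine Eq.trans (congrArg (fun F : ℝ → ℂ => 𝓕 F ω) (funext fun t => ?_)) h
  exact Complex.ofReal_add _ _

theorem fourierVec_mulVec {k l : ℕ} (M : Matrix (Fin k) (Fin l) ℝ) {g : ℝ → Fin l → ℝ}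
    (hg : Integrable g) (ω : ℝ) : fourierVec (fun t => M.mulVec (g t)) ω =
      (M.map (fun x : ℝ => (x : ℂ))).mulVec (fourierVec g ω) := by
  funext i
  have hint (j : Fin l) :
      Integrable fun t => (M i j : ℂ) * Real.fourierChar (-inner ℝ t ω) • (g t j : ℂ) :=
    ((Real.fourierIntegral_convergent_iff ω).2 (hg.eval j).ofReal).const_mul _
  simp only [fourierVec, mulVec, dotProduct, Real.fourier_eq, map_apply,
    ← integral_const_mul]
  rw [← integral_finsetSum _ fun j _ => hint j]
  refine integral_congr_ae (.of_forall fun t => ?_)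
  simp only [Complex.ofReal_sum, Complex.ofReal_mul, Finset.smul_sum, mul_smul_comm]

theorem fourierVec_deriv_of_hasDerivAt_off_countable {k : ℕ} {y y' : ℝ → Fin k → ℝ} {S : Set ℝ}
    (hS : S.Countable) (hy : Continuous y) (hd : ∀ t ∉ S, HasDerivAt y (y' t) t)
    (hyi : Integrable y) (hyi' : Integrable y') (h0 : Tendsto y (cocompact ℝ) (𝓝 0)) (ω : ℝ) :
    fourierVec y' ω = (Complex.I * (2 * Real.pi * ω : ℝ)) • fourierVec y ω := by
  funext i
  refine fourier_deriv_of_hasDerivAt_off_countable hS (by fun_prop)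
    (fun t ht => (hasDerivAt_pi.1 (hd t ht) i).ofReal_comp) (hyi.eval i).ofReal
    (hyi'.eval i).ofReal ?_ ω
  have h := (Complex.continuous_ofReal.comp (continuous_apply i)).tendsto (0 : Fin k → ℝ) |>.comp h0
  simpa [Function.comp_def] using h

variable {m r : ℕ} {A : EE τ n →L[ℝ] (Fin n → ℝ)} {C : EE τ n →L[ℝ] (Fin r → ℝ)}
  {B : Matrix (Fin n) (Fin m) ℝ} {G1 : Matrix (Fin r) (Fin r) ℝ} {G2 : Matrix (Fin r) (Fin m) ℝ}
  {G3 : Matrix (Fin m) (Fin m) ℝ} {κ : ℝ} {y : ℝ → Fin n → ℝ} {ξ : ℝ → Fin m → ℝ}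

variable (A C B G1 G2 G3 κ ξ) in
/-- The form `𝒢` along the controlled trajectory `ẏ(t) = A y_t + B ξ(t)`, strengthened by `κ` times
the integrand of the `H¹`-norm of `y`. -/
def energyDensity (y : ℝ → Fin n → ℝ) (hy : Continuous y) (t : ℝ) : ℝ :=
  Gq G1 G2 G3 (C (seg τ y hy t)) (ξ t) + κ * (y t ⬝ᵥ y t +
    (A (seg τ y hy t) + B.mulVec (ξ t)) ⬝ᵥ (A (seg τ y hy t) + B.mulVec (ξ t)))

theorem MemL1L2.of_seg (hτ : 0 ≤ τ) {hy : Continuous y} (h : MemL1L2 (seg τ y hy)) :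
    MemL1L2 y := by
  have hmem : (0 : ℝ) ∈ Set.Icc (-τ) 0 := ⟨by linarith, le_rfl⟩
  simpa [seg_apply] using
    h.clm_comp (ContinuousMap.evalCLM ℝ ⟨0, hmem⟩ : EE τ n →L[ℝ] Fin n → ℝ)

/-- Plancherel's theorem turns the energy into the integral of the frequency inequality, evaluated
at `u = -ŷ(ω)`. -/
theorem UniformFrequencyCondition.integral_energyDensity_nonpos
    {α : ℂ → Matrix (Fin n) (Fin n) ℂ} {γ : ℂ → Matrix (Fin r) (Fin n) ℂ}
    (hU : UniformFrequencyCondition α γ B G1 G2 G3 κ) (hA : IsSymbol A α) (hC : IsSymbol C γ)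
    (hτ : 0 ≤ τ) {hy : Continuous y} (hseg : MemL1L2 (seg τ y hy)) (hξ : MemL1L2 ξ)
    (h0 : Tendsto y (cocompact ℝ) (𝓝 0)) {S : Set ℝ} (hS : S.Countable)
    (hd : ∀ t ∉ S, HasDerivAt y (A (seg τ y hy t) + B.mulVec (ξ t)) t) :
    Integrable (energyDensity A C B G1 G2 G3 κ ξ y hy) ∧
      ∫ t, energyDensity A C B G1 G2 G3 κ ξ y hy t ≤ 0 := by
  have hAy := hseg.clm_comp A
  have hBξ : MemL1L2 fun t => B.mulVec (ξ t) :=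
    hξ.clm_comp (LinearMap.toContinuousLinearMap B.mulVecLin)
  have hy1 := hseg.of_seg hτ
  obtain ⟨hint, -, heq⟩ := ((hseg.clm_comp C).sameIntegral_Gq hξ G1 G2 G3).add
    ((hy1.sameIntegral_dotProduct_self.add
      (hAy.add hBξ).sameIntegral_dotProduct_self).const_mul κ)
  refine ⟨hint, heq.trans_le (integral_nonpos fun ω => ?_)⟩
  have hderiv := fourierVec_deriv_of_hasDerivAt_off_countable hS hy hd hy1.1 (hAy.add hBξ).1 h0 ω
  have hfield := (fourierVec_add hAy.1 hBξ.1 ω).symm.trans hderiv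
  rw [hA.fourierVec_apply_seg hy hseg.1, fourierVec_mulVec B hξ.1] at hfield
  have hle := hU (2 * Real.pi * ω) (fourierVec ξ ω) (-fourierVec y ω) (by
    rw [mulVec_neg, sub_mulVec, smul_mulVec, one_mulVec, ← hfield]
    abel)
  simp only [mulVec_neg, Pi.neg_apply, neg_neg, norm_neg, smul_neg] at hle
  simp only [hderiv, hC.fourierVec_apply_seg hy hseg.1]
  exact hle

end PlancherelInequality

section Splice

/-- The function that follows `w` up to time `T` and from then on follows `h`, started at time
`0`. -/
def splice (w h : ℝ → Fin n → ℝ) (T t : ℝ) : Fin n → ℝ :=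
  if t ≤ T then w t else h (t - T)

variable {w h : ℝ → Fin n → ℝ} (hw : Continuous w) {hh : Continuous h} {T t : ℝ}

theorem splice_of_le (ht : t ≤ T) : splice w h T t = w t :=
  if_pos ht

variable {hw} in
theorem splice_of_ge (hwh : seg τ w hw T = seg τ h hh 0) (ht : T - τ ≤ t) :
    splice w h T t = h (t - T) := by
  rcases le_or_gt t T with htT | htT
  · have := congr($hwh ⟨t - T, by linarith, by linarith⟩)
    simpa [splice_of_le htT, seg_apply] using this
  · exact if_neg htT.not_ge

variable {hw} in
theorem continuous_splice (hτ : 0 ≤ τ) (hwh : seg τ w hw T = seg τ h hh 0) :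
    Continuous (splice w h T) := by
  refine Continuous.if_le hw (hh.comp (continuous_sub_right T)) continuous_id continuous_const ?_
  rintro t rfl
  exact (splice_of_le le_rfl).symm.trans (splice_of_ge hwh (by linarith))

theorem seg_splice_of_le (hs : Continuous (splice w h T)) (ht : t ≤ T) :
    seg τ (splice w h T) hs t = seg τ w hw t :=
  seg_congr _ _ fun _ hθ => splice_of_le (by linarith [hθ.2])

variable {hw} in
theorem seg_splice_of_ge (hs : Continuous (splice w h T)) (hwh : seg τ w hw T = seg τ h hh 0)
    (ht : T ≤ t) : seg τ (splice w h T) hs t = seg τ h hh (t - T) :=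
  seg_congr _ _ fun θ hθ => (splice_of_ge hwh (by linarith [hθ.1])).trans
    (congrArg h (by ring))

theorem hasDerivAt_splice_of_lt {w' : Fin n → ℝ} (ht : t < T) (hd : HasDerivAt w w' t) :
    HasDerivAt (splice w h T) w' t :=
  hd.congr_of_eventuallyEq (by filter_upwards [Iio_mem_nhds ht] with s hs using splice_of_le hs.le)

theorem hasDerivAt_splice_of_gt {h' : Fin n → ℝ} (ht : T < t) (hd : HasDerivAt h h' (t - T)) :
    HasDerivAt (splice w h T) h' t :=
  (hd.comp_sub_const t T).congr_of_eventuallyEq (by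
    filter_upwards [Ioi_mem_nhds ht] with s hs using if_neg (not_le.2 hs))

end Splice

section EnergyFromRest

theorem dotProduct_self_nonneg {k : ℕ} (v : Fin k → ℝ) : 0 ≤ v ⬝ᵥ v := by
  simpa using dotProduct_self_star_nonneg v

theorem exists_norm_le_mul_exp_neg_mul_abs {E : Type*} [SeminormedAddGroup E] {f : ℝ → E}
    {c K ε T : ℝ} (hε : 0 ≤ ε) (hin : ∀ t, |t| ≤ T → ‖f t‖ ≤ c)
    (hout : ∀ t, T < |t| → ‖f t‖ ≤ K * Real.exp (-ε * |t|)) :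
    ∃ C, ∀ t, ‖f t‖ ≤ C * Real.exp (-ε * |t|) := by
  refine ⟨max K (c * Real.exp (ε * T)), fun t => ?_⟩
  rcases le_or_gt |t| T with ht | ht
  · have hc : 0 ≤ c := (norm_nonneg _).trans (hin t ht)
    have hexp : 1 ≤ Real.exp (ε * T) * Real.exp (-ε * |t|) := by
      rw [← Real.exp_add, Real.one_le_exp_iff]
      nlinarith
    calc ‖f t‖ ≤ c * 1 := by simpa using hin t ht
      _ ≤ c * (Real.exp (ε * T) * Real.exp (-ε * |t|)) := by gcongr
      _ = c * Real.exp (ε * T) * Real.exp (-ε * |t|) := by ring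
      _ ≤ _ := by gcongr; exact le_max_right _ _
  · exact (hout t ht).trans (by gcongr; exact le_max_left _ _)

theorem memL1L2_indicator_Ioc {E : Type*} [NormedAddCommGroup E] {f : ℝ → E} (hf : Continuous f)
    (T : ℝ) : MemL1L2 ((Set.Ioc 0 T).indicator f) := by
  obtain ⟨c, hc⟩ := (isCompact_Icc (a := -T) (b := T)).exists_bound_of_continuousOn hf.continuousOn
  obtain ⟨_, hC⟩ := exists_norm_le_mul_exp_neg_mul_abs (f := (Set.Ioc 0 T).indicator f) (T := T)
    (K := 0) zero_le_one
    (fun t ht => (norm_indicator_le_norm_self f t).trans (hc t (abs_le.1 ht)))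
    (fun t ht => by
      rw [Set.indicator_of_notMem fun h => ht.not_ge (abs_le.2 ⟨by linarith [h.1, h.2], h.2⟩)]
      simp)
  exact memL1L2_of_norm_le_exp (hf.aestronglyMeasurable.indicator measurableSet_Ioc) one_pos hC

theorem exists_norm_seg_splice_le {w h : ℝ → Fin n → ℝ} {hw : Continuous w} {hh : Continuous h}
    {K ε T : ℝ} (hs : Continuous (splice w h T)) (hwh : seg τ w hw T = seg τ h hh 0) (hT : 0 ≤ T)
    (hw_neg : ∀ t ≤ 0, seg τ w hw t = 0) (hε : 0 ≤ ε)
    (hdecay : ∀ t, 0 ≤ t → ‖seg τ h hh t‖ ≤ K * Real.exp (-ε * t)) :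
    ∃ K', ∀ t, ‖seg τ (splice w h T) hs t‖ ≤ K' * Real.exp (-ε * |t|) := by
  obtain ⟨c, hc⟩ := (isCompact_Icc (a := -T) (b := T)).exists_bound_of_continuousOn
    (continuous_seg (τ := τ) hs).continuousOn
  have hK : 0 ≤ K := by simpa using (norm_nonneg _).trans (hdecay 0 le_rfl)
  refine exists_norm_le_mul_exp_neg_mul_abs (K := Real.exp (ε * T) * K) hε
    (fun t ht => hc t (abs_le.1 ht)) fun t ht => ?_
  rcases le_total t 0 with ht0 | ht0
  · rw [seg_splice_of_le hw hs (ht0.trans hT), hw_neg t ht0, norm_zero]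
    positivity
  · rw [abs_of_nonneg ht0] at ht ⊢
    rw [seg_splice_of_ge hs hwh ht.le]
    refine (hdecay (t - T) (by linarith)).trans_eq ?_
    rw [show -ε * (t - T) = ε * T + -ε * t by ring, Real.exp_add]
    ring

variable {m r : ℕ} {A : EE τ n →L[ℝ] (Fin n → ℝ)} {C : EE τ n →L[ℝ] (Fin r → ℝ)}
  {B : Matrix (Fin n) (Fin m) ℝ} {G1 : Matrix (Fin r) (Fin r) ℝ} {G2 : Matrix (Fin r) (Fin m) ℝ}
  {G3 : Matrix (Fin m) (Fin m) ℝ} {κ : ℝ} {p : ℝ → Fin n → ℝ} {hp : Continuous p}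
  {ξ : ℝ → Fin m → ℝ} {T : ℝ}

/-- Extend `p` by `0` to the left and by a free solution to the right. -/
theorem IsExpStable.exists_decaying_extension (hstab : IsExpStable A) (hτ : 0 ≤ τ)
    (h0 : seg τ p hp 0 = 0)
    (hd : ∀ t, 0 ≤ t → HasDerivWithinAt p (A (seg τ p hp t) + B.mulVec (ξ t)) (Set.Ici 0) t)
    (hT : 0 ≤ T) :
    ∃ (y : ℝ → Fin n → ℝ) (hy : Continuous y),
      (∀ t ∈ Set.Icc 0 T, seg τ y hy t = seg τ p hp t) ∧
      (∃ ε > 0, ∃ K, ∀ t, ‖seg τ y hy t‖ ≤ K * Real.exp (-ε * |t|)) ∧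
      ∀ t ∉ ({0, T} : Set ℝ), HasDerivAt y
        (A (seg τ y hy t) + B.mulVec ((Set.Ioc 0 T).indicator ξ t)) t := by
  obtain ⟨h, hh, hh0, hfree⟩ := exists_isFreeSolution A hτ (seg τ p hp T)
  obtain ⟨M, -, ε, hε, hdecay⟩ := hstab
  have hzero : Continuous fun _ : ℝ => (0 : Fin n → ℝ) := continuous_const
  have hrest : seg τ (fun _ => 0) hzero 0 = seg τ p hp 0 := h0.symm
  have hw := continuous_splice hτ hrest
  set w := splice (fun _ => 0) p 0
  have hw_neg {t : ℝ} (ht : t ≤ 0) : seg τ w hw t = 0 := seg_splice_of_le hzero hw ht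
  have hw_pos {t : ℝ} (ht : 0 ≤ t) : seg τ w hw t = seg τ p hp t := by
    simpa using seg_splice_of_ge hw hrest ht
  have hwh : seg τ w hw T = seg τ h hh 0 := (hw_pos hT).trans hh0.symm
  have hy := continuous_splice hτ hwh
  refine ⟨splice w h T, hy, fun t ht => (seg_splice_of_le hw hy ht.2).trans (hw_pos ht.1),
    ⟨ε, hε, exists_norm_seg_splice_le hy hwh hT (fun _ => hw_neg) hε.le fun t ht =>
      (hdecay h hh hfree t ht).trans_eq (mul_right_comm _ _ _)⟩, fun t ht => ?_⟩
  obtain ⟨ht0, htT⟩ : t ≠ 0 ∧ t ≠ T := by simpa using ht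
  rcases htT.lt_or_gt with hlt | hgt
  · refine hasDerivAt_splice_of_lt hlt ?_
    rw [seg_splice_of_le hw hy hlt.le]
    rcases ht0.lt_or_gt with hneg | hpos
    · refine hasDerivAt_splice_of_lt hneg ?_
      rw [hw_neg hneg.le, Set.indicator_of_notMem fun h => hneg.not_gt h.1, map_zero,
        mulVec_zero, add_zero]
      exact hasDerivAt_const t 0
    · refine hasDerivAt_splice_of_gt hpos ?_
      have ht : t ∈ Set.Ioc 0 T := ⟨hpos, hlt.le⟩
      rw [hw_pos hpos.le, Set.indicator_of_mem ht, sub_zero]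
      exact (hd t hpos.le).hasDerivAt (Ici_mem_nhds hpos)
  · refine hasDerivAt_splice_of_gt hgt ?_
    rw [seg_splice_of_ge hy hwh hgt.le, Set.indicator_of_notMem fun h => hgt.not_ge h.2,
      mulVec_zero, add_zero]
    exact (hfree _ (sub_nonneg.2 hgt.le)).hasDerivAt (Ici_mem_nhds (sub_pos.2 hgt))

theorem UniformFrequencyCondition.intervalIntegral_energyDensity_nonpos
    {α : ℂ → Matrix (Fin n) (Fin n) ℂ} {γ : ℂ → Matrix (Fin r) (Fin n) ℂ}
    (hU : UniformFrequencyCondition α γ B G1 G2 G3 κ) (hA : IsSymbol A α) (hC : IsSymbol C γ)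
    (hτ : 0 ≤ τ) (hstab : IsExpStable A) (hκ : 0 ≤ κ)
    (hG : ∀ φ : EE τ n, 0 ≤ Gq G1 G2 G3 (C φ) 0) (hξ : Continuous ξ) (h0 : seg τ p hp 0 = 0)
    (hd : ∀ t, 0 ≤ t → HasDerivWithinAt p (A (seg τ p hp t) + B.mulVec (ξ t)) (Set.Ici 0) t)
    (hT : 0 ≤ T) : ∫ t in 0..T, energyDensity A C B G1 G2 G3 κ ξ p hp t ≤ 0 := by
  obtain ⟨y, hy, hyp, ⟨ε, hε, K, hK⟩, hyd⟩ := hstab.exists_decaying_extension hτ h0 hd hT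
  have hseg : MemL1L2 (seg τ y hy) :=
    memL1L2_of_norm_le_exp (continuous_seg hy).aestronglyMeasurable hε hK
  have hlim : Tendsto y (cocompact ℝ) (𝓝 0) := by
    refine squeeze_zero_norm (fun t => (norm_le_norm_seg hy (by simpa using hτ)).trans (hK t)) ?_
    have hexp := Real.tendsto_exp_atBot.comp
      (tendsto_norm_cocompact_atTop (E := ℝ).const_mul_atTop_of_neg (neg_lt_zero.2 hε))
    simpa [Function.comp_def] using hexp.const_mul K
  obtain ⟨hint, hle⟩ := hU.integral_energyDensity_nonpos hA hC hτ hseg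
    (memL1L2_indicator_Ioc hξ T) hlim (Set.toFinite {0, T}).countable hyd
  rw [intervalIntegral.integral_of_le hT]
  have hin : ∫ t in Set.Ioc 0 T, energyDensity A C B G1 G2 G3 κ ξ p hp t = ∫ t in Set.Ioc 0 T,
      energyDensity A C B G1 G2 G3 κ ((Set.Ioc 0 T).indicator ξ) y hy t := by
    refine setIntegral_congr_fun measurableSet_Ioc fun t ht => ?_
    have hpy : y t = p t := by
      simpa [seg_apply] using congr($(hyp t (Set.Ioc_subset_Icc_self ht)) ⟨0, by linarith, le_rfl⟩)
    simp only [energyDensity, Set.indicator_of_mem ht, hyp t (Set.Ioc_subset_Icc_self ht), hpy]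
  have hout : 0 ≤ ∫ t in (Set.Ioc 0 T)ᶜ,
      energyDensity A C B G1 G2 G3 κ ((Set.Ioc 0 T).indicator ξ) y hy t := by
    refine setIntegral_nonneg measurableSet_Ioc.compl fun t ht => ?_
    rw [energyDensity, Set.indicator_of_notMem ht]
    exact add_nonneg (hG _) (mul_nonneg hκ (add_nonneg (dotProduct_self_nonneg _)
      (dotProduct_self_nonneg _)))
  linarith [integral_add_compl (measurableSet_Ioc (a := (0 : ℝ)) (b := T)) hint]

end EnergyFromRest

section SectorEnergy

theorem exists_abs_dotProduct_mulVec_le {k l : ℕ} (M : Matrix (Fin k) (Fin l) ℝ) :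
    ∃ b, 0 ≤ b ∧ ∀ u v, |u ⬝ᵥ M.mulVec v| ≤ b * (‖u‖ * ‖v‖) := by
  obtain ⟨b, hb, hM⟩ := exists_norm_mulVec_le M
  refine ⟨k * b, by positivity, fun u v => ?_⟩
  calc |u ⬝ᵥ M.mulVec v| ≤ ∑ i, |u i * M.mulVec v i| := Finset.abs_sum_le_sum_abs _ _
    _ ≤ ∑ _i : Fin k, ‖u‖ * (b * ‖v‖) := by
        gcongr with i
        rw [abs_mul]
        gcongr
        exacts [norm_le_pi_norm u i, (norm_le_pi_norm _ i).trans (hM v)]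
    _ = k * b * (‖u‖ * ‖v‖) := by simp; ring

variable {m r : ℕ} {A : EE τ n →L[ℝ] (Fin n → ℝ)} {C : EE τ n →L[ℝ] (Fin r → ℝ)}
  {B : Matrix (Fin n) (Fin m) ℝ} {G1 : Matrix (Fin r) (Fin r) ℝ} {G2 : Matrix (Fin r) (Fin m) ℝ}
  {G3 : Matrix (Fin m) (Fin m) ℝ} {κ : ℝ}

theorem norm_sq_le_dotProduct_self {k : ℕ} (v : Fin k → ℝ) : ‖v‖ ^ 2 ≤ v ⬝ᵥ v := by
  simpa [dotProduct, ← pow_two] using norm_sq_le_sum_norm_sq v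

theorem continuous_Gq : Continuous fun q : (Fin r → ℝ) × (Fin m → ℝ) => Gq G1 G2 G3 q.1 q.2 := by
  simp only [Gq, dotProduct, mulVec]
  fun_prop

theorem two_mul_mul_mul_le (c : ℝ) (hκ : 0 < κ) (x y : ℝ) :
    2 * c * (x * y) ≤ κ * x ^ 2 + c ^ 2 / κ * y ^ 2 := by
  have h : 0 ≤ (κ * x - c * y) ^ 2 / κ := by positivity
  have hexpand : (κ * x - c * y) ^ 2 / κ =
      κ * x ^ 2 + c ^ 2 / κ * y ^ 2 - 2 * c * (x * y) := by
    field_simp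
    ring
  linarith

variable (G1 G2 G3) in
theorem exists_Gq_add_le (hκ : 0 < κ) : ∃ K, 0 ≤ K ∧ ∀ σ ζ ξ,
    Gq G1 G2 G3 (σ + ζ) ξ ≤ Gq (G1 + κ • 1) G2 (G3 + κ • 1) σ ξ + K * ‖ζ‖ ^ 2 := by
  obtain ⟨b, hb, hG1⟩ := exists_abs_dotProduct_mulVec_le G1
  obtain ⟨c, -, hG2⟩ := exists_abs_dotProduct_mulVec_le G2
  refine ⟨b + b ^ 2 / κ + c ^ 2 / κ, by positivity, fun σ ζ ξ => ?_⟩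
  have hexpand : Gq G1 G2 G3 (σ + ζ) ξ = Gq G1 G2 G3 σ ξ + σ ⬝ᵥ G1.mulVec ζ + ζ ⬝ᵥ G1.mulVec σ +
      ζ ⬝ᵥ G1.mulVec ζ + 2 * (ζ ⬝ᵥ G2.mulVec ξ) := by
    simp only [Gq, mulVec_add, dotProduct_add, add_dotProduct]
    ring
  have hσζ := (abs_le.1 (hG1 σ ζ)).2
  have hζσ := (abs_le.1 (hG1 ζ σ)).2
  have hζζ := (abs_le.1 (hG1 ζ ζ)).2
  have hζξ := (abs_le.1 (hG2 ζ ξ)).2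
  have hσ := mul_le_mul_of_nonneg_left (norm_sq_le_dotProduct_self σ) hκ.le
  have hξ := mul_le_mul_of_nonneg_left (norm_sq_le_dotProduct_self ξ) hκ.le
  rw [hexpand, Gq_add_smul_one]
  linarith [two_mul_mul_mul_le b hκ ‖σ‖ ‖ζ‖, two_mul_mul_mul_le c hκ ‖ξ‖ ‖ζ‖]

theorem IsExpStable.exists_integral_norm_sq_le (h : IsExpStable A) :
    ∃ K, 0 ≤ K ∧ ∀ x hx, IsFreeSolution A x hx → ∀ T, 0 ≤ T →
      ∫ t in 0..T, ‖seg τ x hx t‖ ^ 2 ≤ K * ‖seg τ x hx 0‖ ^ 2 := by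
  obtain ⟨M, hM, ε, hε, hdecay⟩ := h
  refine ⟨M ^ 2 * (2 * ε)⁻¹, by positivity, fun x hx hfree T hT => ?_⟩
  have hpow : ∀ t ∈ Set.Icc 0 T, ‖seg τ x hx t‖ ^ 2 ≤
      M ^ 2 * ‖seg τ x hx 0‖ ^ 2 * Real.exp (-(2 * ε) * t) := fun t ht => by
    calc ‖seg τ x hx t‖ ^ 2 ≤ (M * Real.exp (-ε * t) * ‖seg τ x hx 0‖) ^ 2 := by
          gcongr
          exact hdecay x hx hfree t ht.1
      _ = M ^ 2 * ‖seg τ x hx 0‖ ^ 2 * Real.exp (-ε * t) ^ 2 := by ring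
      _ = _ := by rw [← Real.exp_nat_mul]; push_cast; ring_nf
  have hcont := (continuous_seg (τ := τ) hx).norm.pow 2
  calc ∫ t in 0..T, ‖seg τ x hx t‖ ^ 2
      ≤ ∫ t in 0..T, M ^ 2 * ‖seg τ x hx 0‖ ^ 2 * Real.exp (-(2 * ε) * t) :=
        intervalIntegral.integral_mono_on hT (hcont.intervalIntegrable _ _)
          (Continuous.intervalIntegrable (by fun_prop) _ _) hpow
    _ = M ^ 2 * (2 * ε)⁻¹ * ‖seg τ x hx 0‖ ^ 2 * (1 - Real.exp (-(2 * ε) * T)) := by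
        rw [intervalIntegral.integral_const_mul, integral_exp_mul_zero_right (by linarith),
          inv_neg]
        ring
    _ ≤ M ^ 2 * (2 * ε)⁻¹ * ‖seg τ x hx 0‖ ^ 2 :=
        mul_le_of_le_one_right (by positivity) (by linarith [Real.exp_pos (-(2 * ε) * T)])

variable (A C B G1 G2 G3) in
/-- `x` solves `ẋ(t) = A x_t + B ξ(t)` for `t ≥ 0` with a continuous input `ξ` along which the
quadratic constraint `𝒢(C x_t, ξ(t)) ≥ 0` holds. -/
structure IsSectorSolution (x : ℝ → Fin n → ℝ) (hx : Continuous x) (ξ : ℝ → Fin m → ℝ) :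
    Prop where
  continuous_input : Continuous ξ
  hasDerivWithinAt : ∀ t, 0 ≤ t →
    HasDerivWithinAt x (A (seg τ x hx t) + B.mulVec (ξ t)) (Set.Ici 0) t
  form_nonneg : ∀ t, 0 ≤ t → 0 ≤ Gq G1 G2 G3 (C (seg τ x hx t)) (ξ t)

theorem IsSectorSolution.continuous_norm_sq_add_norm_sq {x : ℝ → Fin n → ℝ} {hx : Continuous x}
    {ξ : ℝ → Fin m → ℝ} (h : IsSectorSolution A C B G1 G2 G3 x hx ξ) :
    Continuous fun t => ‖x t‖ ^ 2 + ‖A (seg τ x hx t) + B.mulVec (ξ t)‖ ^ 2 :=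
  (hx.norm.pow 2).add (((A.continuous.comp (continuous_seg hx)).add
    (Continuous.matrix_mulVec continuous_const h.continuous_input)).norm.pow 2)

theorem IsSectorSolution.comp_add_right {x : ℝ → Fin n → ℝ} {hx : Continuous x}
    {ξ : ℝ → Fin m → ℝ} (h : IsSectorSolution A C B G1 G2 G3 x hx ξ) {q : ℝ} (hq : 0 ≤ q) :
    IsSectorSolution A C B G1 G2 G3 (fun t => x (t + q)) (hx.comp (continuous_add_const q))
      fun t => ξ (t + q) where
  continuous_input := h.continuous_input.comp (continuous_add_const q)
  hasDerivWithinAt t ht := by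
    rw [seg_comp_add_const hx]
    exact hasDerivWithinAt_comp_add_const (h.hasDerivWithinAt _ (add_nonneg ht hq))
      fun s hs => add_nonneg hs hq
  form_nonneg t ht := by
    rw [seg_comp_add_const hx]
    exact h.form_nonneg _ (add_nonneg ht hq)

theorem norm_sq_add_le {E : Type*} [SeminormedAddGroup E] (u v : E) :
    ‖u + v‖ ^ 2 ≤ 2 * (‖u‖ ^ 2 + ‖v‖ ^ 2) := by
  nlinarith [norm_add_le u v, norm_nonneg (u + v), sq_nonneg (‖u‖ - ‖v‖)]

theorem continuous_energyDensity {y : ℝ → Fin n → ℝ} {hy : Continuous y} {ξ : ℝ → Fin m → ℝ}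
    (hξ : Continuous ξ) : Continuous (energyDensity A C B G1 G2 G3 κ ξ y hy) := by
  have hA := A.continuous.comp (continuous_seg (τ := τ) hy)
  have hC := C.continuous.comp (continuous_seg (τ := τ) hy)
  have hG := (continuous_Gq (G1 := G1) (G2 := G2) (G3 := G3)).comp (hC.prodMk hξ)
  have hv : Continuous fun t => A (seg τ y hy t) + B.mulVec (ξ t) :=
    hA.add (continuous_const.matrix_mulVec hξ)
  exact hG.add (((hy.dotProduct hy).add (hv.dotProduct hv)).const_mul κ)

variable (A C B G1 G2 G3) in
theorem exists_le_energyDensity_sub (hτ : 0 ≤ τ) (hκ : 0 < κ) :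
    ∃ K, 0 ≤ K ∧ ∀ (x z : ℝ → Fin n → ℝ) (hx : Continuous x) (hz : Continuous z)
      (ξ : ℝ → Fin m → ℝ) t, 0 ≤ Gq G1 G2 G3 (C (seg τ x hx t)) (ξ t) →
      κ * (‖x t‖ ^ 2 + ‖A (seg τ x hx t) + B.mulVec (ξ t)‖ ^ 2) ≤
        2 * energyDensity A C B (G1 + κ • 1) G2 (G3 + κ • 1) κ ξ (fun t => x t - z t)
          (hx.sub hz) t + K * ‖seg τ z hz t‖ ^ 2 := by
  obtain ⟨K, hK, hperturb⟩ := exists_Gq_add_le G1 G2 G3 hκ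
  refine ⟨2 * K * ‖C‖ ^ 2 + 2 * κ * (1 + ‖A‖ ^ 2), by positivity,
    fun x z hx hz ξ t hform => ?_⟩
  set φ := seg τ x hx t
  set ζ := seg τ z hz t
  set p := x t - z t with hp
  set p' := A (φ - ζ) + B.mulVec (ξ t) with hp'
  have hG : 0 ≤ Gq (G1 + κ • 1) G2 (G3 + κ • 1) (C (φ - ζ)) (ξ t) + K * ‖C ζ‖ ^ 2 :=
    hform.trans (by simpa using hperturb (C (φ - ζ)) (C ζ) (ξ t))
  have hCζ : ‖C ζ‖ ^ 2 ≤ ‖C‖ ^ 2 * ‖ζ‖ ^ 2 := by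
    rw [← mul_pow]
    gcongr
    exact C.le_opNorm ζ
  have hxt : ‖x t‖ ^ 2 ≤ 2 * (‖p‖ ^ 2 + ‖ζ‖ ^ 2) := by
    have hzζ : ‖z t‖ ≤ ‖ζ‖ := norm_le_norm_seg hz (by simpa using hτ)
    calc ‖x t‖ ^ 2 = ‖p + z t‖ ^ 2 := by rw [hp, sub_add_cancel]
      _ ≤ 2 * (‖p‖ ^ 2 + ‖z t‖ ^ 2) := norm_sq_add_le _ _
      _ ≤ _ := by gcongr
  have hxt' : ‖A φ + B.mulVec (ξ t)‖ ^ 2 ≤ 2 * (‖p'‖ ^ 2 + ‖A‖ ^ 2 * ‖ζ‖ ^ 2) := by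
    calc ‖A φ + B.mulVec (ξ t)‖ ^ 2 = ‖p' + A ζ‖ ^ 2 := by rw [hp', map_sub]; congr 2; abel
      _ ≤ 2 * (‖p'‖ ^ 2 + ‖A ζ‖ ^ 2) := norm_sq_add_le _ _
      _ ≤ 2 * (‖p'‖ ^ 2 + (‖A‖ * ‖ζ‖) ^ 2) := by gcongr; exact A.le_opNorm ζ
      _ = _ := by ring
  have hp_le := norm_sq_le_dotProduct_self p
  have hp'_le := norm_sq_le_dotProduct_self p'
  have hdensity : energyDensity A C B (G1 + κ • 1) G2 (G3 + κ • 1) κ ξ (fun t => x t - z t)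
      (hx.sub hz) t = Gq (G1 + κ • 1) G2 (G3 + κ • 1) (C (φ - ζ)) (ξ t) +
        κ * (p ⬝ᵥ p + p' ⬝ᵥ p') := rfl
  rw [hdensity]
  nlinarith

/-- Subtracting the free solution with the same initial segment leaves a trajectory from rest. -/
theorem UniformFrequencyCondition.exists_integral_norm_sq_le
    {α : ℂ → Matrix (Fin n) (Fin n) ℂ} {γ : ℂ → Matrix (Fin r) (Fin n) ℂ}
    (hU : UniformFrequencyCondition α γ B (G1 + κ • 1) G2 (G3 + κ • 1) κ) (hA : IsSymbol A α)
    (hC : IsSymbol C γ) (hτ : 0 ≤ τ) (hstab : IsExpStable A) (hκ : 0 < κ)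
    (hG : ∀ φ : EE τ n, 0 ≤ Gq G1 G2 G3 (C φ) 0) :
    ∃ K, 0 ≤ K ∧ ∀ x hx ξ, IsSectorSolution A C B G1 G2 G3 x hx ξ → ∀ T, 0 ≤ T →
      ∫ t in 0..T, (‖x t‖ ^ 2 + ‖A (seg τ x hx t) + B.mulVec (ξ t)‖ ^ 2) ≤
        K * ‖seg τ x hx 0‖ ^ 2 := by
  obtain ⟨K, hK, hpointwise⟩ := exists_le_energyDensity_sub A C B G1 G2 G3 hτ hκ
  obtain ⟨L, hL, hfree_le⟩ := hstab.exists_integral_norm_sq_le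
  refine ⟨κ⁻¹ * (K * L), by positivity, fun x hx ξ hx_sol T hT => ?_⟩
  obtain ⟨z, hz, hz0, hfree⟩ := exists_isFreeSolution A hτ (seg τ x hx 0)
  have hrest := hU.intervalIntegral_energyDensity_nonpos (p := fun t => x t - z t)
    (hp := hx.sub hz) hA hC hτ hstab hκ.le (fun φ => ?_) hx_sol.continuous_input
    (sub_eq_zero.2 hz0.symm) (fun t ht => ?_) hT
  · rw [mul_assoc, inv_mul_eq_div, le_div_iff₀' hκ]
    set E := energyDensity A C B (G1 + κ • 1) G2 (G3 + κ • 1) κ ξ (fun t => x t - z t) (hx.sub hz)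
    have hE : IntervalIntegrable (fun t => 2 * E t) volume 0 T :=
      ((continuous_energyDensity hx_sol.continuous_input).const_mul 2).intervalIntegrable 0 T
    have hζ : IntervalIntegrable (fun t => K * ‖seg τ z hz t‖ ^ 2) volume 0 T :=
      (((continuous_seg (τ := τ) hz).norm.pow 2).const_mul K).intervalIntegrable 0 T
    have hmono := intervalIntegral.integral_mono_on hT
      ((hx_sol.continuous_norm_sq_add_norm_sq.const_mul κ).intervalIntegrable _ _) (hE.add hζ)
      fun t ht => hpointwise x z hx hz ξ t (hx_sol.form_nonneg t ht.1)
    rw [intervalIntegral.integral_const_mul, intervalIntegral.integral_add hE hζ,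
      intervalIntegral.integral_const_mul, intervalIntegral.integral_const_mul] at hmono
    have hz_le := mul_le_mul_of_nonneg_left (hfree_le z hz hfree T hT) hK
    rw [hz0] at hz_le
    linarith
  · have hσ : 0 ≤ C φ ⬝ᵥ C φ := dotProduct_self_nonneg _
    simpa [Gq_add_smul_one] using add_nonneg (hG φ) (mul_nonneg hκ.le hσ)
  · refine ((hx_sol.hasDerivWithinAt t ht).sub (hfree t ht)).congr_deriv ?_
    rw [show seg τ (fun s => x s - z s) (hx.sub hz) t = seg τ x hx t - seg τ z hz t from rfl,
      map_sub]
    abel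

end SectorEnergy

section Decay

/-- Datko's argument: on `N` consecutive windows of length `a` the function `f` cannot stay
comparable with `f s`, since the integrals over these windows add up to at most `c * f s`. -/
theorem exists_le_exp_of_integral_le {K c a : ℝ} (hK : 0 < K) (hc : 0 ≤ c) (ha : 0 < a) :
    ∃ M > 0, ∃ ε > 0, ∀ f e : ℝ → ℝ, (∀ t, 0 ≤ f t) → Continuous e →
      (∀ s t, 0 ≤ s → 0 ≤ t → f (s + t) ≤ K * f s) →
      (∀ t, a ≤ t → f t ≤ ∫ u in (t - a)..t, e u) →
      (∀ s T, 0 ≤ s → 0 ≤ T → ∫ u in s..(s + T), e u ≤ c * f s) →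
      ∀ t, 0 ≤ t → f t ≤ M * Real.exp (-ε * t) * f 0 := by
  obtain ⟨N, hN⟩ := exists_nat_gt (2 * (K * c))
  have hN0 : (0 : ℝ) < N := lt_of_le_of_lt (by positivity) hN
  refine ⟨2 * K, by positivity, Real.log 2 / (N * a), by positivity,
    fun f e hf he hgrow hwindow hint t ht => ?_⟩
  refine le_exp_of_le_half hK.le (by positivity) (hf 0) hgrow (fun s hs => ?_) ht
  have hwindows : ∑ k ∈ Finset.range N, f (s + (k + 1 : ℕ) * a) ≤ c * f s := by
    calc ∑ k ∈ Finset.range N, f (s + (k + 1 : ℕ) * a)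
        ≤ ∑ k ∈ Finset.range N, ∫ u in (s + (k : ℕ) * a)..(s + (k + 1 : ℕ) * a), e u := by
          gcongr with k
          refine (hwindow _ ?_).trans_eq ?_
          · push_cast
            nlinarith [k.cast_nonneg (α := ℝ)]
          · congr 1
            push_cast
            ring
      _ = ∫ u in s..(s + N * a), e u := by
          rw [intervalIntegral.sum_integral_adjacent_intervals (a := fun k : ℕ => s + k * a)
            fun k _ => he.intervalIntegrable _ _]
          simp
      _ ≤ c * f s := hint s _ hs (by positivity)
  have hlast : N * f (s + N * a) ≤ K * ∑ k ∈ Finset.range N, f (s + (k + 1 : ℕ) * a) := by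
    rw [Finset.mul_sum, ← nsmul_eq_mul]
    refine (Finset.card_nsmul_le_sum _ _ _ fun k hk => ?_).trans' (by rw [Finset.card_range])
    have hkN : ((k + 1 : ℕ) : ℝ) ≤ N := by exact_mod_cast Finset.mem_range.1 hk
    calc f (s + N * a) = f (s + (k + 1 : ℕ) * a + (N - (k + 1 : ℕ)) * a) := by congr 1; ring
      _ ≤ K * f (s + (k + 1 : ℕ) * a) :=
        hgrow _ _ (by positivity) (mul_nonneg (sub_nonneg.2 hkN) ha.le)
  have hcontract : N * f (s + N * a) ≤ N * (1 / 2 * f s) :=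
    calc N * f (s + N * a) ≤ K * (c * f s) := hlast.trans (by gcongr)
      _ = K * c * f s := by ring
      _ ≤ N / 2 * f s := by
          gcongr
          · exact hf s
          · linarith
      _ = N * (1 / 2 * f s) := by ring
  exact le_of_mul_le_mul_left hcontract hN0

variable {x v : ℝ → Fin n → ℝ} {a b : ℝ}

theorem norm_sq_le_add_integral (hx : Continuous x) (hv : Continuous v)
    (hd : ∀ t ∈ Set.Ioo a b, HasDerivAt x (v t) t) (hab : a ≤ b) :
    ‖x b‖ ^ 2 ≤ ‖x a‖ ^ 2 + ∫ t in a..b, (‖x t‖ ^ 2 + ‖v t‖ ^ 2) := by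
  have hcoord (i : Fin n) :
      x b i ^ 2 ≤ ‖x a‖ ^ 2 + ∫ t in a..b, (‖x t‖ ^ 2 + ‖v t‖ ^ 2) := by
    have hderiv : ∀ t ∈ Set.Ioo a b, HasDerivAt (fun t => x t i ^ 2) (2 * (x t i * v t i)) t :=
      fun t ht => ((hasDerivAt_pi.1 (hd t ht) i).pow 2).congr_deriv (by norm_num; ring)
    have hcont : Continuous fun t => 2 * (x t i * v t i) := by fun_prop
    have hftc := intervalIntegral.integral_eq_sub_of_hasDerivAt_of_le hab
      (by fun_prop : Continuous fun t => x t i ^ 2).continuousOn hderiv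
      (hcont.intervalIntegrable _ _)
    have hmono : ∫ t in a..b, 2 * (x t i * v t i) ≤ ∫ t in a..b, (‖x t‖ ^ 2 + ‖v t‖ ^ 2) := by
      refine intervalIntegral.integral_mono_on hab (hcont.intervalIntegrable _ _)
        (Continuous.intervalIntegrable (by fun_prop) _ _) fun t _ => ?_
      have hxi := sq_le_sq' (neg_le_of_abs_le (norm_le_pi_norm (x t) i))
        (le_of_abs_le (norm_le_pi_norm (x t) i))
      have hvi := sq_le_sq' (neg_le_of_abs_le (norm_le_pi_norm (v t) i))
        (le_of_abs_le (norm_le_pi_norm (v t) i))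
      linarith [two_mul_le_add_sq (x t i) (v t i)]
    have hxa := sq_le_sq' (neg_le_of_abs_le (norm_le_pi_norm (x a) i))
      (le_of_abs_le (norm_le_pi_norm (x a) i))
    linarith
  have hnonneg : 0 ≤ ‖x a‖ ^ 2 + ∫ t in a..b, (‖x t‖ ^ 2 + ‖v t‖ ^ 2) :=
    add_nonneg (sq_nonneg _) (intervalIntegral.integral_nonneg hab fun t _ => by positivity)
  rw [← Real.le_sqrt (norm_nonneg _) hnonneg, pi_norm_le_iff_of_nonneg (Real.sqrt_nonneg _)]
  exact fun i => Real.abs_le_sqrt (hcoord i)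

theorem norm_sq_le_two_mul_integral (hx : Continuous x) (hv : Continuous v)
    (hd : ∀ t ∈ Set.Ioo (b - 1) b, HasDerivAt x (v t) t) :
    ‖x b‖ ^ 2 ≤ 2 * ∫ t in (b - 1)..b, (‖x t‖ ^ 2 + ‖v t‖ ^ 2) := by
  set I := ∫ t in (b - 1)..b, (‖x t‖ ^ 2 + ‖v t‖ ^ 2)
  have he : Continuous fun t => ‖x t‖ ^ 2 + ‖v t‖ ^ 2 := by fun_prop
  have hpoint : ∀ a ∈ Set.Icc (b - 1) b, ‖x b‖ ^ 2 ≤ ‖x a‖ ^ 2 + ‖v a‖ ^ 2 + I := fun a ha => by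
    have hstart := norm_sq_le_add_integral hx hv
      (fun t ht => hd t ⟨ha.1.trans_lt ht.1, ht.2⟩) ha.2
    have hsub : ∫ t in a..b, (‖x t‖ ^ 2 + ‖v t‖ ^ 2) ≤ I :=
      intervalIntegral.integral_mono_interval ha.1 ha.2 le_rfl
        (Eventually.of_forall fun t => by positivity) (he.intervalIntegrable _ _)
    nlinarith [sq_nonneg ‖v a‖]
  have haverage : ∫ _ in (b - 1)..b, ‖x b‖ ^ 2 ≤ ∫ a in (b - 1)..b, (‖x a‖ ^ 2 + ‖v a‖ ^ 2 + I) :=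
    intervalIntegral.integral_mono_on (by linarith) intervalIntegrable_const
      (Continuous.intervalIntegrable (by fun_prop) _ _) hpoint
  rw [intervalIntegral.integral_const, intervalIntegral.integral_add (he.intervalIntegrable _ _)
    intervalIntegrable_const, intervalIntegral.integral_const] at haverage
  simpa [I, two_mul] using haverage

theorem norm_seg_sq_le (hx : Continuous x) {t c : ℝ} (hc : 0 ≤ c)
    (h : ∀ s ∈ Set.Icc (t - τ) t, ‖x s‖ ^ 2 ≤ c) : ‖seg τ x hx t‖ ^ 2 ≤ c :=
  (Real.le_sqrt (norm_nonneg _) hc).1 <| norm_seg_le hx (Real.sqrt_nonneg _) fun s hs =>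
    (Real.le_sqrt (norm_nonneg _) hc).2 (h s hs)

theorem norm_seg_sq_le_add_integral (hτ : 0 ≤ τ) (hx : Continuous x) (hv : Continuous v)
    (hd : ∀ t ∈ Set.Ioo a b, HasDerivAt x (v t) t) (hab : a ≤ b) :
    ‖seg τ x hx b‖ ^ 2 ≤ ‖seg τ x hx a‖ ^ 2 + ∫ t in a..b, (‖x t‖ ^ 2 + ‖v t‖ ^ 2) := by
  have he : Continuous fun t => ‖x t‖ ^ 2 + ‖v t‖ ^ 2 := by fun_prop
  have hnonneg : 0 ≤ ∫ t in a..b, (‖x t‖ ^ 2 + ‖v t‖ ^ 2) :=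
    intervalIntegral.integral_nonneg hab fun t _ => by positivity
  refine norm_seg_sq_le hx (by positivity) fun s hs => ?_
  rcases le_total s a with hsa | has
  · have hxs : ‖x s‖ ^ 2 ≤ ‖seg τ x hx a‖ ^ 2 := by
      gcongr
      exact norm_le_norm_seg hx ⟨by linarith [hs.1], hsa⟩
    linarith
  · calc ‖x s‖ ^ 2 ≤ ‖x a‖ ^ 2 + ∫ t in a..s, (‖x t‖ ^ 2 + ‖v t‖ ^ 2) :=
          norm_sq_le_add_integral hx hv (fun t ht => hd t ⟨ht.1, ht.2.trans_le hs.2⟩) has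
      _ ≤ _ := by
          gcongr
          · exact norm_le_norm_seg hx (by simpa using hτ)
          · exact intervalIntegral.integral_mono_interval le_rfl has hs.2
              (Eventually.of_forall fun t => by positivity) (he.intervalIntegrable _ _)

theorem norm_seg_sq_le_two_mul_integral (hτ : 0 ≤ τ) (hx : Continuous x) (hv : Continuous v)
    (hd : ∀ t ∈ Set.Ioo (b - (τ + 1)) b, HasDerivAt x (v t) t) :
    ‖seg τ x hx b‖ ^ 2 ≤ 2 * ∫ t in (b - (τ + 1))..b, (‖x t‖ ^ 2 + ‖v t‖ ^ 2) := by
  have he : Continuous fun t => ‖x t‖ ^ 2 + ‖v t‖ ^ 2 := by fun_prop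
  have hnonneg : 0 ≤ ∫ t in (b - (τ + 1))..b, (‖x t‖ ^ 2 + ‖v t‖ ^ 2) :=
    intervalIntegral.integral_nonneg (by linarith) fun t _ => by positivity
  refine norm_seg_sq_le hx (by positivity) fun s hs => ?_
  calc ‖x s‖ ^ 2 ≤ 2 * ∫ t in (s - 1)..s, (‖x t‖ ^ 2 + ‖v t‖ ^ 2) :=
        norm_sq_le_two_mul_integral hx hv
          fun t ht => hd t ⟨by linarith [hs.1, ht.1], ht.2.trans_le hs.2⟩
    _ ≤ _ := by
        gcongr
        exact intervalIntegral.integral_mono_interval (by linarith [hs.1]) (by linarith) hs.2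
          (Eventually.of_forall fun t => by positivity) (he.intervalIntegrable _ _)

theorem exists_norm_seg_le_of_integral_le (n : ℕ) (hτ : 0 ≤ τ) {c : ℝ} (hc : 0 ≤ c) :
    ∃ M > 0, ∃ ε > 0, ∀ (x : ℝ → Fin n → ℝ) (hx : Continuous x) (v : ℝ → Fin n → ℝ),
      Continuous v → (∀ t, 0 ≤ t → HasDerivWithinAt x (v t) (Set.Ici 0) t) →
      (∀ s T, 0 ≤ s → 0 ≤ T →
        ∫ t in s..(s + T), (‖x t‖ ^ 2 + ‖v t‖ ^ 2) ≤ c * ‖seg τ x hx s‖ ^ 2) →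
      ∀ t, 0 ≤ t → ‖seg τ x hx t‖ ≤ M * Real.exp (-ε * t) * ‖seg τ x hx 0‖ := by
  obtain ⟨M, hM, ε, hε, hdecay⟩ := exists_le_exp_of_integral_le (K := 1 + c) (c := 2 * c)
    (a := τ + 1) (by positivity) (by positivity) (by positivity)
  refine ⟨√M, by positivity, ε / 2, by positivity, fun x hx v hv hd hint t ht => ?_⟩
  have hderiv {t : ℝ} (ht : 0 < t) : HasDerivAt x (v t) t :=
    (hd t ht.le).hasDerivAt (Ici_mem_nhds ht)
  have hsq : ‖seg τ x hx t‖ ^ 2 ≤ M * Real.exp (-ε * t) * ‖seg τ x hx 0‖ ^ 2 := by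
    refine hdecay (fun t => ‖seg τ x hx t‖ ^ 2) (fun t => 2 * (‖x t‖ ^ 2 + ‖v t‖ ^ 2))
      (fun t => sq_nonneg _) (by fun_prop) (fun s T hs hT => ?_) (fun t ht => ?_)
      (fun s T hs hT => ?_) t ht
    · have hstep := norm_seg_sq_le_add_integral hτ hx hv
        (fun t ht => hderiv (hs.trans_lt ht.1)) (le_add_of_nonneg_right hT)
      linarith [hint s T hs hT]
    · rw [intervalIntegral.integral_const_mul]
      exact norm_seg_sq_le_two_mul_integral hτ hx hv fun s hs => hderiv (by linarith [hs.1])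
    · rw [intervalIntegral.integral_const_mul, mul_assoc]
      exact mul_le_mul_of_nonneg_left (hint s T hs hT) zero_le_two
  refine le_of_sq_le_sq (hsq.trans_eq ?_) (by positivity)
  rw [mul_pow, mul_pow, Real.sq_sqrt hM.le, ← Real.exp_nat_mul]
  congr 3
  push_cast
  ring

variable {r m : ℕ} {A : EE τ n →L[ℝ] (Fin n → ℝ)} {C : EE τ n →L[ℝ] (Fin r → ℝ)}
  {B : Matrix (Fin n) (Fin m) ℝ} {G1 : Matrix (Fin r) (Fin r) ℝ}
  {G2 : Matrix (Fin r) (Fin m) ℝ} {G3 : Matrix (Fin m) (Fin m) ℝ} {α : ℂ → Matrix (Fin n) (Fin n) ℂ}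
  {γ : ℂ → Matrix (Fin r) (Fin n) ℂ} {κ : ℝ}

theorem UniformFrequencyCondition.exists_norm_seg_le
    (hU : UniformFrequencyCondition α γ B (G1 + κ • 1) G2 (G3 + κ • 1) κ)
    (hA : IsSymbol A α) (hC : IsSymbol C γ) (hτ : 0 ≤ τ) (hstab : IsExpStable A) (hκ : 0 < κ)
    (hG : ∀ φ, 0 ≤ Gq G1 G2 G3 (C φ) 0) :
    ∃ M > 0, ∃ ε > 0, ∀ x hx ξ, IsSectorSolution A C B G1 G2 G3 x hx ξ →
      ∀ t, 0 ≤ t → ‖seg τ x hx t‖ ≤ M * Real.exp (-ε * t) * ‖seg τ x hx 0‖ := by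
  obtain ⟨K, hK, henergy⟩ := hU.exists_integral_norm_sq_le hA hC hτ hstab hκ hG
  obtain ⟨M, hM, ε, hε, hdecay⟩ := exists_norm_seg_le_of_integral_le n hτ hK
  refine ⟨M, hM, ε, hε, fun x hx ξ hsol => hdecay x hx
    (fun t => A (seg τ x hx t) + B.mulVec (ξ t)) ?_ hsol.hasDerivWithinAt fun s T hs hT => ?_⟩
  · exact continuous_apply_seg.add (continuous_const.matrix_mulVec hsol.continuous_input)
  · have hshift := henergy _ _ _ (hsol.comp_add_right hs) T hT
    simp only [seg_comp_add_const hx, zero_add] at hshift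
    rwa [intervalIntegral.integral_comp_add_right
      (fun t => ‖x t‖ ^ 2 + ‖A (seg τ x hx t) + B.mulVec (ξ t)‖ ^ 2),
      zero_add, add_comm T] at hshift

end Decay

section ExponentialShift

variable {ν : ℝ} {x : ℝ → Fin n → ℝ} {t : ℝ}

/-- The operator `(expWeight τ n ν φ)(θ) = e^{νθ} φ(θ)` on history segments, which relates the
history of `t ↦ e^{νt} x(t)` to that of `x`. -/
def expWeight (τ : ℝ) (n : ℕ) (ν : ℝ) : EE τ n →L[ℝ] EE τ n where
  toFun φ := ⟨fun θ => Real.exp (ν * θ) • φ θ, by fun_prop⟩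
  map_add' φ ψ := ContinuousMap.ext fun θ => smul_add _ _ _
  map_smul' c φ := ContinuousMap.ext fun θ => smul_comm (Real.exp (ν * θ)) c (φ θ)
  cont := ContinuousMap.continuous_of_continuous_uncurry _ (by
    simp only [Function.uncurry_def, ContinuousMap.coe_mk]
    fun_prop)

theorem expWeight_apply (φ : EE τ n) (θ : Set.Icc (-τ) (0 : ℝ)) :
    expWeight τ n ν φ θ = Real.exp (ν * θ) • φ θ :=
  rfl

theorem expWeight_neg_expWeight (φ : EE τ n) : expWeight τ n (-ν) (expWeight τ n ν φ) = φ := by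
  ext1 θ
  rw [expWeight_apply, expWeight_apply, smul_smul, ← Real.exp_add]
  simp

theorem expWeight_expSegRe (p : ℂ) (w : Fin n → ℂ) :
    expWeight τ n ν (expSegRe τ p w) = expSegRe τ (p + ν) w := by
  ext θ i
  simp only [expWeight_apply, expSegRe, ContinuousMap.coe_mk, Pi.smul_apply, smul_eq_mul]
  rw [← Complex.re_ofReal_mul, ← mul_assoc, Complex.ofReal_exp, ← Complex.exp_add]
  congr 3
  push_cast
  ring

theorem continuous_exp_smul (ν : ℝ) (hx : Continuous x) :
    Continuous fun t => Real.exp (ν * t) • x t := by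
  fun_prop

theorem seg_exp_smul (hx : Continuous x) (ν t : ℝ) :
    seg τ _ (continuous_exp_smul ν hx) t = Real.exp (ν * t) • expWeight τ n ν (seg τ x hx t) := by
  ext1 θ
  rw [ContinuousMap.smul_apply, expWeight_apply, seg_apply, seg_apply, smul_smul, ← Real.exp_add,
    mul_add]

theorem norm_seg_le_norm_seg_exp_smul (hx : Continuous x) (ν t : ℝ) :
    ‖seg τ x hx t‖ ≤ ‖expWeight τ n (-ν)‖ *
      (Real.exp (-ν * t) * ‖seg τ _ (continuous_exp_smul ν hx) t‖) := by
  have hcancel : seg τ x hx t = expWeight τ n (-ν)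
      (Real.exp (-ν * t) • seg τ _ (continuous_exp_smul ν hx) t) := by
    rw [seg_exp_smul hx, smul_smul, ← Real.exp_add, map_smul, expWeight_neg_expWeight]
    simp
  calc ‖seg τ x hx t‖ ≤ ‖expWeight τ n (-ν)‖ *
        ‖Real.exp (-ν * t) • seg τ _ (continuous_exp_smul ν hx) t‖ := by
        conv_lhs => rw [hcancel]
        exact ContinuousLinearMap.le_opNorm _ _
    _ = _ := by rw [norm_smul, Real.norm_eq_abs, Real.abs_exp]

/-- The right-hand side of the linear delay equation satisfied by `t ↦ e^{νt} x(t)` when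
`ẋ(t) = A x_t`. -/
def expShift (hτ : 0 ≤ τ) (A : EE τ n →L[ℝ] (Fin n → ℝ)) (ν : ℝ) : EE τ n →L[ℝ] (Fin n → ℝ) :=
  ν • ContinuousMap.evalCLM ℝ ⟨0, by simpa using hτ⟩ + A ∘L expWeight τ n (-ν)

variable {hτ : 0 ≤ τ} {A : EE τ n →L[ℝ] (Fin n → ℝ)}

theorem expShift_apply (φ : EE τ n) :
    expShift hτ A ν φ = ν • φ ⟨0, by simpa using hτ⟩ + A (expWeight τ n (-ν) φ) :=
  rfl

theorem expShift_expShift_neg : expShift hτ (expShift hτ A ν) (-ν) = A := by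
  ext1 φ
  have hcancel := expWeight_neg_expWeight (ν := ν) φ
  simp only [expShift_apply, neg_neg, hcancel, expWeight_apply]
  simp

theorem hasDerivWithinAt_exp_smul {hx : Continuous x} {u : Fin n → ℝ} {s : Set ℝ}
    (hd : HasDerivWithinAt x (A (seg τ x hx t) + u) s t) :
    HasDerivWithinAt (fun t => Real.exp (ν * t) • x t)
      (expShift hτ A ν (seg τ _ (continuous_exp_smul ν hx) t) + Real.exp (ν * t) • u) s t := by
  have hexp : HasDerivWithinAt (fun t => Real.exp (ν * t)) (Real.exp (ν * t) * ν) s t := by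
    simpa using ((hasDerivAt_id t).const_mul ν).exp.hasDerivWithinAt
  refine (hexp.smul hd).congr_deriv ?_
  rw [expShift_apply, seg_exp_smul hx, map_smul, expWeight_neg_expWeight, map_smul,
    ContinuousMap.smul_apply, expWeight_apply, seg_apply]
  simp only [mul_zero, Real.exp_zero, one_smul, add_zero, smul_add, smul_smul]
  module

theorem IsFreeSolution.exp_smul {hx : Continuous x} (h : IsFreeSolution A x hx) :
    IsFreeSolution (expShift hτ A ν) _ (continuous_exp_smul ν hx) := fun t ht => by
  simpa using hasDerivWithinAt_exp_smul (hτ := hτ) (ν := ν) (u := 0) (by simpa using h t ht)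

theorem isExpStable_expShift (h : ∀ x hx, IsFreeSolution A x hx →
    Tendsto (fun t => Real.exp (ν * t) * ‖seg τ x hx t‖) atTop (𝓝 0)) :
    IsExpStable (expShift hτ A ν) := by
  refine isExpStable_of_tendsto hτ fun y hy hfree => ?_
  have hfree' : IsFreeSolution A _ (continuous_exp_smul (-ν) hy) := by
    simpa only [expShift_expShift_neg] using hfree.exp_smul (hτ := hτ) (ν := -ν)
  refine squeeze_zero_norm (norm_seg_le_norm_seg_exp_smul hy (-ν)) ?_
  simpa only [neg_neg, mul_zero] using (h _ _ hfree').const_mul ‖expWeight τ n (- -ν)‖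

variable {r m : ℕ} {C : EE τ n →L[ℝ] (Fin r → ℝ)} {B : Matrix (Fin n) (Fin m) ℝ}
  {G1 : Matrix (Fin r) (Fin r) ℝ} {G2 : Matrix (Fin r) (Fin m) ℝ} {G3 : Matrix (Fin m) (Fin m) ℝ}
  {α : ℂ → Matrix (Fin n) (Fin n) ℂ} {γ : ℂ → Matrix (Fin r) (Fin n) ℂ}

theorem IsSymbol.expShift (hA : IsSymbol A α) :
    IsSymbol (expShift hτ A ν) fun p => (ν : ℂ) • 1 + α (p - ν) := fun p w => by
  ext i
  have hcurrent : expSegRe τ p w ⟨0, by simpa using hτ⟩ = fun i => (w i).re := by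
    simp [expSegRe]
  rw [expShift_apply, expWeight_expSegRe, hA, hcurrent]
  simp [Matrix.add_mulVec, Matrix.smul_mulVec, sub_eq_add_neg]

theorem IsSymbol.comp_expWeight (hC : IsSymbol C γ) :
    IsSymbol (C ∘L expWeight τ n (-ν)) fun p => γ (p - ν) := fun p w => by
  simp only [ContinuousLinearMap.comp_apply, expWeight_expSegRe, hC _ w, Complex.ofReal_neg,
    sub_eq_add_neg]

theorem IsSectorSolution.exp_smul {hx : Continuous x} {ξ : ℝ → Fin m → ℝ}
    (h : IsSectorSolution A C B G1 G2 G3 x hx ξ) :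
    IsSectorSolution (DelayStability.expShift hτ A ν) (C ∘L expWeight τ n (-ν)) B G1 G2 G3 _
      (continuous_exp_smul ν hx) fun t => Real.exp (ν * t) • ξ t where
  continuous_input := by
    have := h.continuous_input
    fun_prop
  hasDerivWithinAt t ht := by
    rw [Matrix.mulVec_smul]
    exact hasDerivWithinAt_exp_smul (h.hasDerivWithinAt t ht)
  form_nonneg t ht := by
    rw [ContinuousLinearMap.comp_apply, seg_exp_smul hx, map_smul, expWeight_neg_expWeight,
      map_smul, Gq_smul]
    exact mul_nonneg (sq_nonneg _) (h.form_nonneg t ht)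

end ExponentialShift

section NonlinearEquation

variable {r m : ℕ} {A : EE τ n →L[ℝ] (Fin n → ℝ)} {C : EE τ n →L[ℝ] (Fin r → ℝ)}
  {B : Matrix (Fin n) (Fin m) ℝ} {G1 : Matrix (Fin r) (Fin r) ℝ} {G2 : Matrix (Fin r) (Fin m) ℝ}
  {G3 : Matrix (Fin m) (Fin m) ℝ} {α : ℂ → Matrix (Fin n) (Fin n) ℂ}
  {γ : ℂ → Matrix (Fin r) (Fin n) ℂ} {ν : ℝ}

theorem dotProduct_self_le_of_norm_le {k l : ℕ} {v : Fin k → ℝ} {w : Fin l → ℝ} {Λ : ℝ}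
    (h : ‖v‖ ≤ Λ * ‖w‖) : v ⬝ᵥ v ≤ k * Λ ^ 2 * (w ⬝ᵥ w) :=
  calc v ⬝ᵥ v ≤ k * ‖v‖ ^ 2 := by
        simpa [dotProduct, ← pow_two] using sum_norm_sq_le v
    _ ≤ k * (Λ * ‖w‖) ^ 2 := by gcongr
    _ = k * Λ ^ 2 * ‖w‖ ^ 2 := by ring
    _ ≤ k * Λ ^ 2 * (w ⬝ᵥ w) := by
        gcongr
        exact norm_sq_le_dotProduct_self w

theorem IsExpStable.exists_norm_seg_le (hstab : IsExpStable A) (hτ : 0 ≤ τ) (hA : IsSymbol A α)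
    (hC : IsSymbol C γ) (hdet : ∀ ω : ℝ, (α (Complex.I * ω) - (Complex.I * ω) • 1).det ≠ 0)
    (hfreq : ∀ ω : ℝ, FrequencyCondition (α (Complex.I * ω) - (Complex.I * ω) • 1)
      (γ (Complex.I * ω)) B G1 G2 G3) (hG : ∀ φ, 0 ≤ Gq G1 G2 G3 (C φ) 0) (Λ : ℝ) :
    ∃ M > 0, ∃ ε > 0, ∀ x hx ξ, IsSectorSolution A C B G1 G2 G3 x hx ξ →
      (∀ t, 0 ≤ t → ‖ξ t‖ ≤ Λ * ‖C (seg τ x hx t)‖) →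
      ∀ t, 0 ≤ t → ‖seg τ x hx t‖ ≤ M * Real.exp (-ε * t) * ‖seg τ x hx 0‖ := by
  have hL : 0 ≤ m * Λ ^ 2 := by positivity
  obtain ⟨δ, hδ, κ, hκ, hU⟩ := exists_uniformFrequencyCondition hA hC hdet hfreq hL
  obtain ⟨M, hM, ε, hε, hdecay⟩ := hU.exists_norm_seg_le hA hC hτ hstab hκ fun φ => by
    rw [Gq_add_smul_one]
    simpa using add_nonneg (hG φ) (mul_nonneg (by positivity) (dotProduct_self_nonneg (C φ)))
  refine ⟨M, hM, ε, hε, fun x hx ξ hsol hξ => hdecay x hx ξ ⟨hsol.1, hsol.2, fun t ht => ?_⟩⟩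
  rw [Gq_add_smul_one]
  nlinarith [hsol.form_nonneg t ht, dotProduct_self_le_of_norm_le (hξ t ht)]

theorem exists_norm_seg_le_exp_of_frequencyCondition (hτ : 0 ≤ τ) (hA : IsSymbol A α)
    (hC : IsSymbol C γ)
    (hdet : ∀ ω : ℝ, (α (Complex.I * ω - ν) - (Complex.I * ω - ν) • 1).det ≠ 0)
    (hstab : ∀ x hx, IsFreeSolution A x hx →
      Tendsto (fun t => Real.exp (ν * t) * ‖seg τ x hx t‖) atTop (𝓝 0))
    (hfreq : ∀ ω : ℝ, FrequencyCondition (α (Complex.I * ω - ν) - (Complex.I * ω - ν) • 1)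
      (γ (Complex.I * ω - ν)) B G1 G2 G3) (hG : ∀ φ, 0 ≤ Gq G1 G2 G3 (C φ) 0) (Λ : ℝ) :
    ∃ M > 0, ∃ ε > 0, ∀ x hx ξ, IsSectorSolution A C B G1 G2 G3 x hx ξ →
      (∀ t, 0 ≤ t → ‖ξ t‖ ≤ Λ * ‖C (seg τ x hx t)‖) →
      ∀ t, 0 ≤ t → ‖seg τ x hx t‖ ≤ M * Real.exp (-(ν + ε) * t) * ‖seg τ x hx 0‖ := by
  have hchar (p : ℂ) : (ν : ℂ) • (1 : Matrix (Fin n) (Fin n) ℂ) + α (p - ν) - p • 1 =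
      α (p - ν) - (p - ν) • 1 := by module
  obtain ⟨M, hM, ε, hε, hdecay⟩ := (isExpStable_expShift (hτ := hτ) hstab).exists_norm_seg_le hτ
    hA.expShift (hC.comp_expWeight (ν := ν)) (fun ω => by rw [hchar]; exact hdet ω)
    (fun ω => by rw [hchar]; exact hfreq ω) (fun φ => hG _) Λ
  refine ⟨‖expWeight τ n (-ν)‖ * M * ‖expWeight τ n ν‖ + 1, by positivity, ε, hε,
    fun x hx ξ hsol hξ t ht => ?_⟩
  have hweighted : ‖seg τ _ (continuous_exp_smul ν hx) t‖ ≤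
      M * Real.exp (-ε * t) * ‖seg τ _ (continuous_exp_smul ν hx) 0‖ :=
    hdecay _ _ _ hsol.exp_smul (fun s hs => by
      rw [ContinuousLinearMap.comp_apply, seg_exp_smul hx, map_smul, expWeight_neg_expWeight,
        map_smul, norm_smul, norm_smul, mul_left_comm]
      exact mul_le_mul_of_nonneg_left (hξ s hs) (norm_nonneg _)) t ht
  have hinitial : ‖seg τ _ (continuous_exp_smul ν hx) 0‖ ≤ ‖expWeight τ n ν‖ * ‖seg τ x hx 0‖ := by
    rw [seg_exp_smul hx, mul_zero, Real.exp_zero, one_smul]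
    exact ContinuousLinearMap.le_opNorm _ _
  calc ‖seg τ x hx t‖
      ≤ ‖expWeight τ n (-ν)‖ * (Real.exp (-ν * t) *
          (M * Real.exp (-ε * t) * (‖expWeight τ n ν‖ * ‖seg τ x hx 0‖))) := by
        refine (norm_seg_le_norm_seg_exp_smul hx ν t).trans ?_
        gcongr
        exact hweighted.trans (by gcongr)
    _ = ‖expWeight τ n (-ν)‖ * M * ‖expWeight τ n ν‖ * Real.exp (-(ν + ε) * t) *
          ‖seg τ x hx 0‖ := by
        rw [show -(ν + ε) * t = -ν * t + -ε * t by ring, Real.exp_add]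
        ring
    _ ≤ _ := by
        gcongr
        exact le_add_of_nonneg_right zero_le_one

/-- `x` solves the nonlinear delay equation `ẋ(t) = A x_t + B F(t, C x_t) + W(t)` for `t ≥ q`. -/
def IsNonlinearSolution (A : EE τ n →L[ℝ] (Fin n → ℝ)) (C : EE τ n →L[ℝ] (Fin r → ℝ))
    (B : Matrix (Fin n) (Fin m) ℝ) (F : ℝ → (Fin r → ℝ) → (Fin m → ℝ)) (W : ℝ → Fin n → ℝ) (q : ℝ)
    (x : ℝ → Fin n → ℝ) (hx : Continuous x) : Prop :=
  ∀ t, q ≤ t → HasDerivWithinAt x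
    (A (seg τ x hx t) + B.mulVec (F t (C (seg τ x hx t))) + W t) (Set.Ici q) t

theorem continuous_sub_comp_add_const {x y : ℝ → Fin n → ℝ} (hx : Continuous x)
    (hy : Continuous y) (q : ℝ) : Continuous fun t => x (t + q) - y (t + q) := by
  fun_prop

theorem seg_sub_comp_add_const {x y : ℝ → Fin n → ℝ} (hx : Continuous x) (hy : Continuous y)
    (q t : ℝ) : seg τ _ (continuous_sub_comp_add_const hx hy q) t =
      seg τ x hx (t + q) - seg τ y hy (t + q) := by
  rw [← seg_comp_add_const hx, ← seg_comp_add_const hy]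
  rfl

variable {F : ℝ → (Fin r → ℝ) → (Fin m → ℝ)} {W : ℝ → Fin n → ℝ}

theorem IsNonlinearSolution.isSectorSolution_sub
    (hF : Continuous fun p : ℝ × (Fin r → ℝ) => F p.1 p.2) {q : ℝ} {x y : ℝ → Fin n → ℝ}
    {hx : Continuous x} {hy : Continuous y} (hxsol : IsNonlinearSolution A C B F W q x hx)
    (hysol : IsNonlinearSolution A C B F W q y hy)
    (hsector : ∀ t, 0 ≤ Gq G1 G2 G3 (C (seg τ x hx t - seg τ y hy t))
      (F t (C (seg τ x hx t)) - F t (C (seg τ y hy t)))) :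
    IsSectorSolution A C B G1 G2 G3 _ (continuous_sub_comp_add_const hx hy q)
      fun t => F (t + q) (C (seg τ x hx (t + q))) - F (t + q) (C (seg τ y hy (t + q))) where
  continuous_input := by
    have hxC := C.continuous.comp (continuous_seg (τ := τ) hx)
    have hyC := C.continuous.comp (continuous_seg (τ := τ) hy)
    exact ((hF.comp (continuous_id.prodMk hxC)).sub (hF.comp (continuous_id.prodMk hyC))).comp
      (continuous_add_const q)
  hasDerivWithinAt t ht := by
    have hdiff := hasDerivWithinAt_comp_add_const
      ((hxsol (t + q) (by linarith)).sub (hysol (t + q) (by linarith)))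
      (s := Set.Ici 0) fun u (hu : 0 ≤ u) => show q ≤ u + q by linarith
    refine hdiff.congr_deriv ?_
    rw [seg_sub_comp_add_const hx hy, map_sub, Matrix.mulVec_sub]
    abel
  form_nonneg t _ := by
    rw [seg_sub_comp_add_const hx hy]
    exact hsector (t + q)

theorem exists_norm_seg_sub_le (hτ : 0 ≤ τ) (hA : IsSymbol A α) (hC : IsSymbol C γ)
    (hdet : ∀ ω : ℝ, (α (Complex.I * ω - ν) - (Complex.I * ω - ν) • 1).det ≠ 0)
    (hstab : ∀ x hx, IsFreeSolution A x hx →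
      Tendsto (fun t => Real.exp (ν * t) * ‖seg τ x hx t‖) atTop (𝓝 0))
    (hfreq : ∀ ω : ℝ, FrequencyCondition (α (Complex.I * ω - ν) - (Complex.I * ω - ν) • 1)
      (γ (Complex.I * ω - ν)) B G1 G2 G3) (hG : ∀ φ, 0 ≤ Gq G1 G2 G3 (C φ) 0) (Λ : ℝ)
    (hF : Continuous fun p : ℝ × (Fin r → ℝ) => F p.1 p.2) :
    ∃ M > 0, ∃ ε > 0, ∀ q x hx y hy,
      IsNonlinearSolution A C B F W q x hx → IsNonlinearSolution A C B F W q y hy →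
      (∀ t, 0 ≤ Gq G1 G2 G3 (C (seg τ x hx t - seg τ y hy t))
        (F t (C (seg τ x hx t)) - F t (C (seg τ y hy t)))) →
      (∀ t, ‖F t (C (seg τ x hx t)) - F t (C (seg τ y hy t))‖ ≤
        Λ * ‖C (seg τ x hx t) - C (seg τ y hy t)‖) →
      ∀ t, 0 ≤ t → ‖seg τ x hx (t + q) - seg τ y hy (t + q)‖ ≤
        M * Real.exp (-(ν + ε) * t) * ‖seg τ x hx q - seg τ y hy q‖ := by
  obtain ⟨M, hM, ε, hε, hdecay⟩ :=
    exists_norm_seg_le_exp_of_frequencyCondition hτ hA hC hdet hstab hfreq hG Λ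
  refine ⟨M, hM, ε, hε, fun q x hx y hy hxsol hysol hsector hlip t ht => ?_⟩
  have hdiff := hdecay _ _ _ (hxsol.isSectorSolution_sub hF hysol hsector) (fun s _ => by
    rw [seg_sub_comp_add_const hx hy, map_sub]
    exact hlip (s + q)) t ht
  simpa only [seg_sub_comp_add_const hx hy, zero_add] using hdiff

theorem isNonlinearSolution_zero (hF : ∀ t, F t 0 = 0) (q : ℝ) :
    IsNonlinearSolution A C B F 0 q (fun _ => 0) continuous_const := fun t _ => by
  have hseg : seg τ (fun _ => (0 : Fin n → ℝ)) continuous_const t = 0 := rfl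
  simpa [hseg, hF t] using hasDerivWithinAt_const t (Set.Ici q) (0 : Fin n → ℝ)

end NonlinearEquation

section Cocycles

/-- `Psi` is the cocycle of the nonlinear delay equation: `Psi t q v₀ = x_{t+q}` for a solution `x`
with `x_q = v₀`. -/
def IsCocycle {r m : ℕ} (A : EE τ n →L[ℝ] (Fin n → ℝ)) (C : EE τ n →L[ℝ] (Fin r → ℝ))
    (B : Matrix (Fin n) (Fin m) ℝ) (F : ℝ → (Fin r → ℝ) → (Fin m → ℝ)) (W : ℝ → Fin n → ℝ)
    (Psi : ℝ → ℝ → EE τ n → EE τ n) : Prop :=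
  ∀ q v₀, ∃ x hx, seg τ x hx q = v₀ ∧ IsNonlinearSolution A C B F W q x hx ∧
    ∀ t, 0 ≤ t → Psi t q v₀ = seg τ x hx (t + q)

theorem eq_of_bounded_of_exp_contraction {E : Type*} [NormedAddCommGroup E]
    {Ψ : ℝ → ℝ → E → E} {M a : ℝ} (hM : 0 ≤ M) (ha : 0 < a)
    (hΨ : ∀ t, 0 ≤ t → ∀ q v w, ‖Ψ t q v - Ψ t q w‖ ≤ M * Real.exp (-a * t) * ‖v - w‖)
    {v w : ℝ → E} (hv : ∀ t, 0 ≤ t → ∀ q, Ψ t q (v q) = v (q + t))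
    (hw : ∀ t, 0 ≤ t → ∀ q, Ψ t q (w q) = w (q + t))
    (hvb : ∃ c, ∀ s, ‖v s‖ ≤ c) (hwb : ∃ c, ∀ s, ‖w s‖ ≤ c) : v = w := by
  obtain ⟨c, hc⟩ := hvb
  obtain ⟨d, hd⟩ := hwb
  funext s
  have hbound (t : ℝ) (ht : 0 ≤ t) : ‖v s - w s‖ ≤ M * Real.exp (-a * t) * (c + d) := by
    have hpast := hΨ t ht (s - t) (v (s - t)) (w (s - t))
    rw [hv t ht, hw t ht, sub_add_cancel] at hpast
    refine hpast.trans ?_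
    gcongr
    exact (norm_sub_le _ _).trans (add_le_add (hc _) (hd _))
  have hexp : Tendsto (fun t => Real.exp (-a * t)) atTop (𝓝 0) :=
    Real.tendsto_exp_atBot.comp (tendsto_id.const_mul_atTop_of_neg (neg_lt_zero.2 ha))
  have hle := ge_of_tendsto ((hexp.const_mul M).mul_const (c + d))
    ((eventually_ge_atTop 0).mono hbound)
  rw [mul_zero, zero_mul] at hle
  exact sub_eq_zero.1 (norm_le_zero_iff.1 hle)

end Cocycles

theorem statement19_general {τ : ℝ} (hτ : 0 ≤ τ) {n m r : ℕ}
    {A : EE τ n →L[ℝ] (Fin n → ℝ)} {C : EE τ n →L[ℝ] (Fin r → ℝ)}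
    {B : Matrix (Fin n) (Fin m) ℝ} {W : ℝ → Fin n → ℝ} {F : ℝ → (Fin r → ℝ) → (Fin m → ℝ)}
    (hF : Continuous fun p : ℝ × (Fin r → ℝ) => F p.1 p.2) (Λ : ℝ)
    {Psi : ℝ → ℝ → EE τ n → EE τ n} (hPsi : IsCocycle A C B F W Psi)
    {G1 : Matrix (Fin r) (Fin r) ℝ} {G2 : Matrix (Fin r) (Fin m) ℝ}
    {G3 : Matrix (Fin m) (Fin m) ℝ} (hG : ∀ φ, 0 ≤ Gq G1 G2 G3 (C φ) 0)
    {α : ℂ → Matrix (Fin n) (Fin n) ℂ} {γ : ℂ → Matrix (Fin r) (Fin n) ℂ}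
    (hA : IsSymbol A α) (hC : IsSymbol C γ) {ν : ℝ} (hν : 0 ≤ ν)
    (hdet : ∀ ω : ℝ, (α (Complex.I * ω - ν) - (Complex.I * ω - ν) • 1).det ≠ 0)
    (hstab : ∀ x hx, IsFreeSolution A x hx →
      Tendsto (fun t => Real.exp (ν * t) * ‖seg τ x hx t‖) atTop (𝓝 0))
    (hfreq : ∀ ω : ℝ, FrequencyCondition (α (Complex.I * ω - ν) - (Complex.I * ω - ν) • 1)
      (γ (Complex.I * ω - ν)) B G1 G2 G3) :
    ((((∀ (t : ℝ) (v : EE τ n), 0 ≤ Gq G1 G2 G3 (C v) (F t (C v))) ∧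
        (∀ (t : ℝ) (σ : Fin r → ℝ), ‖F t σ‖ ≤ Λ * ‖σ‖)) ∧ W = 0) →
      ∃ M > (0 : ℝ), ∃ ε > (0 : ℝ), ∀ t : ℝ, 0 ≤ t → ∀ (q : ℝ) (v₀ : EE τ n),
        ‖Psi t q v₀‖ ≤ M * Real.exp (-(ν + ε) * t) * ‖v₀‖) ∧
    (((∀ (t : ℝ) (v₁ v₂ : EE τ n),
          0 ≤ Gq G1 G2 G3 (C (v₁ - v₂)) (F t (C v₁) - F t (C v₂))) ∧
        (∀ (t : ℝ) (σ₁ σ₂ : Fin r → ℝ), ‖F t σ₁ - F t σ₂‖ ≤ Λ * ‖σ₁ - σ₂‖)) →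
      ∀ vstar : ℝ → EE τ n,
        (∀ t : ℝ, 0 ≤ t → ∀ q : ℝ, Psi t q (vstar q) = vstar (q + t)) →
        (∃ Cb : ℝ, ∀ s : ℝ, ‖vstar s‖ ≤ Cb) →
        ((∀ v2 : ℝ → EE τ n,
            (∀ t : ℝ, 0 ≤ t → ∀ q : ℝ, Psi t q (v2 q) = v2 (q + t)) →
            (∃ Cb : ℝ, ∀ s : ℝ, ‖v2 s‖ ≤ Cb) → v2 = vstar) ∧
          ∃ M > (0 : ℝ), ∃ ε > (0 : ℝ), ∀ t : ℝ, 0 ≤ t → ∀ (q : ℝ) (v₀ : EE τ n),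
            ‖Psi t q v₀ - Psi t q (vstar q)‖ ≤
              M * Real.exp (-(ν + ε) * t) * ‖v₀ - vstar q‖)) := by
  obtain ⟨M, hM, ε, hε, hdecay⟩ :=
    exists_norm_seg_sub_le (W := W) hτ hA hC hdet hstab hfreq hG Λ hF
  constructor
  · rintro ⟨⟨hSC, hL1⟩, rfl⟩
    refine ⟨M, hM, ε, hε, fun t ht q v₀ => ?_⟩
    have hF0 (s : ℝ) : F s 0 = 0 := by simpa using hL1 s 0
    obtain ⟨x, hx, rfl, hxsol, hPsix⟩ := hPsi q v₀
    have hseg (s : ℝ) : seg τ (fun _ => (0 : Fin n → ℝ)) continuous_const s = 0 := rfl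
    simpa [hPsix t ht, hseg] using hdecay q x hx _ continuous_const hxsol
      (isNonlinearSolution_zero hF0 q) (fun s => by simpa [hseg, hF0] using hSC s _)
      (fun s => by simpa [hseg, hF0] using hL1 s _) t ht
  · rintro ⟨hMSC, hL2⟩ vstar hvstar hbdd
    have hcontract (t : ℝ) (ht : 0 ≤ t) (q : ℝ) (v w : EE τ n) :
        ‖Psi t q v - Psi t q w‖ ≤ M * Real.exp (-(ν + ε) * t) * ‖v - w‖ := by
      obtain ⟨x, hx, rfl, hxsol, hPsix⟩ := hPsi q v
      obtain ⟨y, hy, rfl, hysol, hPsiy⟩ := hPsi q w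
      rw [hPsix t ht, hPsiy t ht]
      exact hdecay q x hx y hy hxsol hysol (fun s => hMSC s _ _) (fun s => hL2 s _ _) t ht
    exact ⟨fun v2 hv2 hv2bdd => eq_of_bounded_of_exp_contraction hM.le (by linarith) hcontract
      hv2 hvstar hv2bdd hbdd, M, hM, ε, hε, fun t ht q v₀ => hcontract t ht q v₀ _⟩

/-- Theorem 5.9 of the paper, the stability criteria: under the
hypotheses of the quadratic Lyapunov functional theorem with `j = 0` and `ν ≥ 0` (no
characteristic roots with `Re p ≥ -ν` and the frequency-domain condition), one has:
(1) under (SC), (L1) and `W ≡ 0`, all solutions decay as `M e^{-(ν + ε)t} ‖v₀‖`;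
(2) under (MSC) and (L2), any complete bounded trajectory `v*` is unique and attracts all
solutions at the rate `M e^{-(ν + ε)t} ‖v₀ - v*(q)‖`. -/
theorem statement19 (τ : ℝ) (hτ : 0 < τ) (n m r : ℕ)
    (Atil : EE τ n →L[ℝ] (Fin n → ℝ))
    (Cop : EE τ n →L[ℝ] (Fin r → ℝ))
    (Btil : Matrix (Fin n) (Fin m) ℝ)
    (Wf : ℝ → (Fin n → ℝ)) (hWcont : Continuous Wf) (hWbdd : ∃ c, ∀ t, ‖Wf t‖ ≤ c)
    (F : ℝ → (Fin r → ℝ) → (Fin m → ℝ))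
    (hFcont : Continuous fun p : ℝ × (Fin r → ℝ) => F p.1 p.2)
    (Λ : ℝ) (hΛ : 0 < Λ)
    (hF : (∀ (t : ℝ) (σ : Fin r → ℝ), ‖F t σ‖ ≤ Λ * ‖σ‖) ∨
      (∀ (t : ℝ) (σ₁ σ₂ : Fin r → ℝ), ‖F t σ₁ - F t σ₂‖ ≤ Λ * ‖σ₁ - σ₂‖))
    -- the semigroup of the linear part, the embedding `𝔼 ⊆ ℍ` and the cocycle
    (G : ℝ → HSp τ n →L[ℝ] HSp τ n)
    (hG0 : G 0 = ContinuousLinearMap.id ℝ (HSp τ n))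
    (hGadd : ∀ t s : ℝ, 0 ≤ t → 0 ≤ s → G (t + s) = (G t).comp (G s))
    (hGcont : ∀ v : HSp τ n, ContinuousOn (fun t => G t v) (Set.Ici (0:ℝ)))
    (e : EE τ n →L[ℝ] HSp τ n) (he_inj : Function.Injective e)
    (he1 : ∀ φ : EE τ n, (e φ).1 = φ ⟨0, Set.right_mem_Icc.mpr (by linarith)⟩)
    (he2 : ∀ φ : EE τ n, ∀ᵐ θ ∂(μτ τ), ∀ hθ : θ ∈ Set.Icc (-τ) (0:ℝ),
      ((e φ).2 : ℝ → (Fin n → ℝ)) θ = φ ⟨θ, hθ⟩)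
    (hG_delay : ∀ (x : ℝ → (Fin n → ℝ)) (hx : Continuous x),
      (∀ s : ℝ, 0 ≤ s → HasDerivWithinAt x (Atil (seg τ x hx s)) (Set.Ici 0) s) →
      ∀ t : ℝ, 0 ≤ t → G t (e (seg τ x hx 0)) = e (seg τ x hx t))
    (Psi : ℝ → ℝ → EE τ n → EE τ n)
    (hPsi : ∀ (q : ℝ) (v₀ : EE τ n), ∃ (x : ℝ → (Fin n → ℝ)) (hx : Continuous x),
      seg τ x hx q = v₀ ∧
      (∀ t : ℝ, q ≤ t → HasDerivWithinAt x
        (Atil (seg τ x hx t) + Btil.mulVec (F t (Cop (seg τ x hx t))) + Wf t)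
        (Set.Ici q) t) ∧
      ∀ t : ℝ, 0 ≤ t → Psi t q v₀ = seg τ x hx (t + q))
    -- the quadratic form `𝓕(v, ξ) = 𝒢(Cv, ξ)` and its properties
    (G1 : Matrix (Fin r) (Fin r) ℝ) (hG1 : G1.IsSymm)
    (G2 : Matrix (Fin r) (Fin m) ℝ)
    (G3 : Matrix (Fin m) (Fin m) ℝ) (hG3 : G3.IsSymm)
    (hF0 : ∀ v : EE τ n, 0 ≤ Gq G1 G2 G3 (Cop v) 0)
    (hcase : ((∀ (t : ℝ) (v : EE τ n), 0 ≤ Gq G1 G2 G3 (Cop v) (F t (Cop v))) ∧ Wf = 0) ∨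
      (∀ (t : ℝ) (v₁ v₂ : EE τ n),
        0 ≤ Gq G1 G2 G3 (Cop (v₁ - v₂)) (F t (Cop v₁) - F t (Cop v₂))))
    -- the matrix functions `α(p)`, `γ(p)`
    (αmat : ℂ → Matrix (Fin n) (Fin n) ℂ) (γmat : ℂ → Matrix (Fin r) (Fin n) ℂ)
    (hα : ∀ (p : ℂ) (w : Fin n → ℂ),
      Atil (expSegRe τ p w) = fun i => ((αmat p).mulVec w i).re)
    (hγ : ∀ (p : ℂ) (w : Fin n → ℂ),
      Cop (expSegRe τ p w) = fun i => ((γmat p).mulVec w i).re)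
    -- `j = 0`: no characteristic roots with `Re p ≥ -ν`
    (ν : ℝ) (hν : 0 ≤ ν)
    (hroots : ∀ p : ℂ,
      (αmat p - p • (1 : Matrix (Fin n) (Fin n) ℂ)).det = 0 → p.re < -ν)
    -- the shifted linear semigroup is stable on `𝔼` (`𝔼ˢ(ν) = 𝔼`, `𝔼ᵘ(ν) = 0`)
    (GE : ℝ → EE τ n → EE τ n)
    (hGE : ∀ t : ℝ, 0 ≤ t → ∀ φ : EE τ n, e (GE t φ) = G t (e φ))
    (hstab : ∀ v₀ : EE τ n,
      Tendsto (fun t : ℝ => Real.exp (ν * t) * ‖GE t v₀‖) atTop (𝓝 0))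
    -- the frequency-domain condition
    (hfreq : ∀ ω : ℝ, ∃ δ > (0:ℝ), ∀ (ξ : Fin m → ℂ) (u : Fin n → ℂ),
      (αmat (Complex.I * ω - ν) - (Complex.I * ω - ν) •
          (1 : Matrix (Fin n) (Fin n) ℂ)).mulVec u =
        (Btil.map (fun x : ℝ => (x : ℂ))).mulVec ξ →
      GqC G1 G2 G3 (fun i => -((γmat (Complex.I * ω - ν)).mulVec u i)) ξ ≤
        -δ * ∑ i, ‖ξ i‖ ^ 2) :
    -- case (SC) with (L1) and `W ≡ 0`
    ((((∀ (t : ℝ) (v : EE τ n), 0 ≤ Gq G1 G2 G3 (Cop v) (F t (Cop v))) ∧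
        (∀ (t : ℝ) (σ : Fin r → ℝ), ‖F t σ‖ ≤ Λ * ‖σ‖)) ∧ Wf = 0) →
      ∃ M > (0:ℝ), ∃ ε > (0:ℝ), ∀ t : ℝ, 0 ≤ t → ∀ (q : ℝ) (v₀ : EE τ n),
        ‖Psi t q v₀‖ ≤ M * Real.exp (-(ν + ε) * t) * ‖v₀‖) ∧
    -- case (MSC) with (L2)
    (((∀ (t : ℝ) (v₁ v₂ : EE τ n),
          0 ≤ Gq G1 G2 G3 (Cop (v₁ - v₂)) (F t (Cop v₁) - F t (Cop v₂))) ∧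
        (∀ (t : ℝ) (σ₁ σ₂ : Fin r → ℝ), ‖F t σ₁ - F t σ₂‖ ≤ Λ * ‖σ₁ - σ₂‖)) →
      ∀ vstar : ℝ → EE τ n,
        (∀ t : ℝ, 0 ≤ t → ∀ q : ℝ, Psi t q (vstar q) = vstar (q + t)) →
        (∃ Cb : ℝ, ∀ s : ℝ, ‖vstar s‖ ≤ Cb) →
        ((∀ v2 : ℝ → EE τ n,
            (∀ t : ℝ, 0 ≤ t → ∀ q : ℝ, Psi t q (v2 q) = v2 (q + t)) →
            (∃ Cb : ℝ, ∀ s : ℝ, ‖v2 s‖ ≤ Cb) → v2 = vstar) ∧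
          ∃ M > (0:ℝ), ∃ ε > (0:ℝ), ∀ t : ℝ, 0 ≤ t → ∀ (q : ℝ) (v₀ : EE τ n),
            ‖Psi t q v₀ - Psi t q (vstar q)‖ ≤
              M * Real.exp (-(ν + ε) * t) * ‖v₀ - vstar q‖)) := by
  refine statement19_general hτ.le hFcont Λ hPsi hF0 hα hγ hν
    (fun ω h => lt_irrefl (-ν) (by simpa using hroots _ h))
    (fun x hx hx_free => (hstab (seg τ x hx 0)).congr' ?_) hfreq
  filter_upwards [eventually_ge_atTop 0] with t ht
  rw [he_inj ((hGE t ht _).trans (hG_delay x hx hx_free t ht))]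

end DelayStability
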